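/- arXiv:1009.5375 — 4 statements merged into one kernel-verified Lean document; each statement's English description precedes it below -/
import Mathlib

section
/- Let p > 3 be a prime. Then ∑_{k=0}^{(p-1)/2} (21k + 8) · C(2k,k)³ ≡ 8p + (-1)^{(p-1)/2} · 32·p³·E_{p-3} (mod p⁴), as a congruence of rational numbers whose denominators are coprime to p (indeed of integers up to the term involving E_{p-3}). -/
/-- `H n` is the harmonic number `∑_{k=1}^n 1/k`. -/
def H (n : ℕ) : ℚ := ∑ k ∈ Finset.Icc 1 n, (1 : ℚ) / k

/-- `H2 n` is the second-order harmonic number `∑_{k=1}^n 1/k²`. -/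
def H2 (n : ℕ) : ℚ := ∑ k ∈ Finset.Icc 1 n, (1 : ℚ) / k ^ 2

/-- The Euler numbers: `E 0 = 1` and `∑_{0 ≤ k ≤ n, k even} C(n,k) E_{n-k} = 0` for `n ≥ 1`. -/
def eulerNumber : ℕ → ℚ
  | 0 => 1
  | n + 1 =>
      -∑ j ∈ (Finset.range (n + 1)).attach,
        if Even (n + 1 - j.1) then ((n + 1).choose (n + 1 - j.1) : ℚ) * eulerNumber j.1 else 0
decreasing_by exact Finset.mem_range.mp j.2

/-- For rationals, `a ≡ b (mod m)` : `m` divides the numerator of `a - b` in lowest terms. -/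
def ratModEq (m : ℕ) (a b : ℚ) : Prop := (m : ℤ) ∣ (a - b).num

/-!
A Wilf–Zeilberger pair turns the sum, for every `n`, into
`8 (2n+1) · (-1)^n C(2n,n) C(3n+1,n) · (1 + ∑_{k=1}^n (-1)^k C(2n+1,k)² / C(3n+1,k))`.
Let `p = 2n + 1` and `Q = ∑_{k=1}^n (-1)^k / k²` (`alternatingH2 n`). The first binomial
product is `∏_{k=1}^n (1 - p²/k²) ≡ 1 - p² H2 n`. Since `C(p,k) = (p/k) C(p-1,k-1)`, the inner
sum is congruent to `p² ∑_{k=1}^n (-1)^k / (k² C(n,k))`, which equals `p² (H2 n + 2 Q)` exactly. In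
the product `H2 n` cancels, leaving `1 + 2 p² Q` modulo `p³`.

Finally `Q ≡ 4 ∑_{k=1}^n (-1)^k (2k)^(p-3)` modulo `p` by Fermat's little theorem, and Euler
polynomials telescope this alternating power sum to `2 (-1)^n E_{p-3}`.
-/

section WZPair

open Finset Nat

/-- The first member `F` of the Wilf–Zeilberger pair `(F, G)` behind the sum of
`(21 k + 8) C(2k,k)³`. Since `F(n+1,k) - F(n,k) = G(n,k+1) - G(n,k)`, the sums `∑_{k ≤ n} F(n,k)`
have an explicit increment in `n`. -/
def wzF (n k : ℕ) : ℚ :=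
  (-1) ^ (n + k) * (8 * (2 * n + 1)) * n.centralBinom * (2 * n + 1).choose k *
    (3 * n + 1 - k).choose n

/-- The second member `G` of the Wilf–Zeilberger pair, written as `F` times a rational
certificate. Only `k ≤ 2n + 1` is meaningful, as the denominator vanishes at `k = 2n + 2` and
`k = 2n + 3`. -/
def wzG (n k : ℕ) : ℚ :=
  wzF n k * (k * (3 * n + 2 - k) *
    (112 * n ^ 3 + 424 * n ^ 2 + 528 * n + 216 - (88 * n ^ 2 + 224 * n + 141) * k
      + (20 * n + 26) * k ^ 2 - k ^ 3)) /
    ((n + 1) * (2 * n + 2 - k) ^ 2 * (2 * n + 3 - k) ^ 2)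

lemma wzF_eq_factorial {n k d : ℕ} (h : k + d = 2 * n + 1) :
    wzF n k = (-1) ^ (n + k) * 8 * ((2 * n + 1)! : ℚ) ^ 2 * (n + d)! /
      (k ! * (n ! : ℚ) ^ 3 * (d ! : ℚ) ^ 2) := by
  rw [wzF, centralBinom, cast_choose ℚ (by lia : n ≤ 2 * n), cast_choose ℚ (by lia : k ≤ 2 * n + 1),
    cast_choose ℚ (by lia : n ≤ 3 * n + 1 - k), show 2 * n - n = n by lia,
    show 2 * n + 1 - k = d by lia, show 3 * n + 1 - k = n + d by lia, show n + d - n = d by lia,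
    factorial_succ (2 * n)]
  push_cast
  field_simp

lemma wzF_succ_right {n k : ℕ} (h : k ≤ 2 * n) :
    wzF n (k + 1) * ((k + 1) * (3 * n + 1 - k)) = -wzF n k * (2 * n + 1 - k) ^ 2 := by
  obtain ⟨d, hd⟩ := Nat.exists_eq_add_of_le h
  have hd' : (2 * n : ℚ) = k + d := mod_cast hd
  rw [wzF_eq_factorial (show k + 1 + d = 2 * n + 1 by lia),
    wzF_eq_factorial (show k + (d + 1) = 2 * n + 1 by lia), ← add_assoc n d 1, ← add_assoc n k 1,
    factorial_succ (n + d), factorial_succ k, factorial_succ d, pow_succ,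
    show (3 * n + 1 - k : ℚ) = n + d + 1 by linear_combination hd',
    show (2 * n + 1 - k : ℚ) = d + 1 by linear_combination hd']
  push_cast
  field_simp

lemma wzF_succ_left {n k : ℕ} (h : k ≤ 2 * n + 1) :
    wzF (n + 1) k * ((n + 1) * (2 * n + 2 - k) ^ 2 * (2 * n + 3 - k) ^ 2) =
      -wzF n k * (4 * (2 * n + 3) ^ 2 * ((3 * n + 2 - k) * (3 * n + 3 - k) * (3 * n + 4 - k))) := by
  obtain ⟨d, hd⟩ := Nat.exists_eq_add_of_le h
  have hk : (k : ℚ) = 2 * n + 1 - d := by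
    have : (2 * n + 1 : ℚ) = k + d := mod_cast hd
    linear_combination -this
  rw [wzF_eq_factorial (show k + (d + 2) = 2 * (n + 1) + 1 by lia),
    wzF_eq_factorial (show k + d = 2 * n + 1 by lia), add_right_comm n 1 k,
    show 2 * (n + 1) + 1 = 2 * n + 1 + 1 + 1 by lia,
    show n + 1 + (d + 2) = n + d + 1 + 1 + 1 by lia]
  simp only [factorial_succ, pow_succ]
  push_cast
  rw [hk, show (2 * n + 2 - (2 * n + 1 - d) : ℚ) = d + 1 by ring,
    show (2 * n + 3 - (2 * n + 1 - d) : ℚ) = d + 2 by ring]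
  field_simp
  ring

lemma wzF_succ_left_sub {n k : ℕ} (h : k ≤ 2 * n) :
    wzF (n + 1) k - wzF n k = wzG n (k + 1) - wzG n k := by
  obtain ⟨d, hd⟩ := Nat.exists_eq_add_of_le h
  have hd' : (2 * n : ℚ) = k + d := mod_cast hd
  have h₁ : (2 * n + 1 - k : ℚ) = d + 1 := by linear_combination hd'
  have h₂ : (2 * n + 2 - k : ℚ) = d + 2 := by linear_combination hd'
  have h₃ : (2 * n + 3 - k : ℚ) = d + 3 := by linear_combination hd'
  have h₄ : (3 * n + 1 - k : ℚ) = n + d + 1 := by linear_combination hd'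
  have h_right := wzF_succ_right h
  have h_left := wzF_succ_left (h.trans (le_succ _))
  rw [h₁, h₄, ← eq_div_iff (by positivity)] at h_right
  rw [h₂, h₃, ← eq_div_iff (by positivity)] at h_left
  rw [wzG, wzG, h_right, h_left]
  push_cast
  rw [h₂, h₃, show (2 * n + 2 - (k + 1) : ℚ) = d + 1 by linear_combination hd',
    show (2 * n + 3 - (k + 1) : ℚ) = d + 2 by linear_combination hd']
  field_simp
  rw [show (k : ℚ) = 2 * n - d by linear_combination -hd']
  ring

lemma wzF_self_add_wzG_self (n : ℕ) :
    wzF (n + 1) (n + 1) + wzG n (n + 1) =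
      (21 * (n + 1) + 8) * ((n + 1).centralBinom : ℚ) ^ 3 := by
  rw [wzG, wzF_eq_factorial (show n + 1 + (n + 2) = 2 * (n + 1) + 1 by lia),
    wzF_eq_factorial (show n + 1 + n = 2 * n + 1 by lia), centralBinom,
    cast_choose ℚ (by lia : n + 1 ≤ 2 * (n + 1)), show 2 * (n + 1) - (n + 1) = n + 1 by lia,
    show 2 * (n + 1) + 1 = 2 * n + 1 + 1 + 1 by lia,
    show n + 1 + (n + 2) = 2 * n + 1 + 1 + 1 by lia, show 2 * (n + 1) = 2 * n + 1 + 1 by lia,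
    show n + n = 2 * n by lia, ← two_mul (n + 1), Even.neg_one_pow (even_two_mul _),
    Odd.neg_one_pow (show Odd (n + (n + 1)) from ⟨n, by lia⟩)]
  simp only [factorial_succ]
  push_cast
  rw [show (2 * n + 2 - (n + 1) : ℚ) = n + 1 by ring,
    show (2 * n + 3 - (n + 1) : ℚ) = n + 2 by ring]
  field_simp
  ring

theorem sum_mul_centralBinom_cube_eq_sum_wzF (n : ℕ) :
    ∑ k ∈ range (n + 1), (21 * k + 8 : ℚ) * (k.centralBinom : ℚ) ^ 3 =
      ∑ k ∈ range (n + 1), wzF n k := by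
  induction n with
  | zero => simp [wzF]
  | succ n ih =>
    have telescope : ∑ k ∈ range (n + 1), (wzF (n + 1) k - wzF n k) = wzG n (n + 1) := by
      rw [sum_congr rfl fun k hk => wzF_succ_left_sub (by grind : k ≤ 2 * n), sum_range_sub]
      simp [wzG]
    rw [sum_sub_distrib] at telescope
    rw [sum_range_succ, ih, sum_range_succ _ (n + 1), cast_succ, ← wzF_self_add_wzG_self]
    linear_combination -telescope

lemma wzF_eq_mul_sq_choose_div {n k : ℕ} (h : k ≤ n) :
    wzF n k = 8 * (2 * n + 1) * ((-1) ^ n * n.centralBinom * (3 * n + 1).choose n) *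
      ((-1) ^ k * ((2 * n + 1).choose k : ℚ) ^ 2 / (3 * n + 1).choose k) := by
  have h_ne : ((3 * n + 1).choose k : ℚ) ≠ 0 := mod_cast (choose_pos (by lia)).ne'
  have h_swap : ((3 * n + 1).choose k * (3 * n + 1 - k).choose n : ℚ) =
      (3 * n + 1).choose n * (2 * n + 1).choose k := by
    have choose_k := choose_mul (n := 3 * n + 1) (Nat.le_add_right k n)
    have choose_n := choose_mul (n := 3 * n + 1) (Nat.le_add_left n k)
    rw [add_tsub_cancel_left, choose_symm_add] at choose_k
    rw [add_tsub_cancel_right, show 3 * n + 1 - n = 2 * n + 1 by lia] at choose_n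
    exact mod_cast choose_k.symm.trans choose_n
  rw [wzF, pow_add]
  field_simp
  linear_combination (n.centralBinom * (2 * n + 1).choose k : ℚ) * h_swap

theorem sum_mul_centralBinom_cube (n : ℕ) :
    ∑ k ∈ range (n + 1), (21 * k + 8 : ℚ) * (k.centralBinom : ℚ) ^ 3 =
      8 * (2 * n + 1) * (((-1) ^ n * n.centralBinom * (3 * n + 1).choose n) *
        (1 + ∑ k ∈ Icc 1 n,
          (-1) ^ k * ((2 * n + 1).choose k : ℚ) ^ 2 / (3 * n + 1).choose k)) := by
  rw [sum_mul_centralBinom_cube_eq_sum_wzF,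
    sum_congr rfl fun k hk => wzF_eq_mul_sq_choose_div (by grind : k ≤ n), ← mul_sum, mul_assoc,
    sum_range_eq_add_Ico _ n.succ_pos]
  simp [Ico_add_one_right_eq_Icc]

end WZPair

section InverseBinomials

open Finset Nat

/-- The alternating second-order harmonic number `∑_{k=1}^n (-1)^k/k²`, companion of `H2`. -/
def alternatingH2 (n : ℕ) : ℚ := ∑ k ∈ Icc 1 n, (-1 : ℚ) ^ k / k ^ 2

lemma H2_succ (n : ℕ) : H2 (n + 1) = H2 n + 1 / ((n + 1 : ℕ) : ℚ) ^ 2 :=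
  sum_Icc_succ_top (by lia) _

lemma alternatingH2_succ (n : ℕ) :
    alternatingH2 (n + 1) = alternatingH2 n + (-1) ^ (n + 1) / ((n + 1 : ℕ) : ℚ) ^ 2 :=
  sum_Icc_succ_top (by lia) _

lemma inv_choose_eq_add_inv_choose {n k : ℕ} (h : k ≤ n) :
    (n.choose k : ℚ)⁻¹ =
      (n + 1) / (n + 2) * (((n + 1).choose k : ℚ)⁻¹ + ((n + 1).choose (k + 1) : ℚ)⁻¹) := by
  obtain ⟨r, rfl⟩ := Nat.exists_eq_add_of_le h
  rw [cast_choose ℚ (by lia : k ≤ k + r), cast_choose ℚ (by lia : k ≤ k + r + 1),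
    cast_choose ℚ (by lia : k + 1 ≤ k + r + 1), show k + r - k = r by lia,
    show k + r + 1 - k = r + 1 by lia, show k + r + 1 - (k + 1) = r by lia]
  simp only [factorial_succ]
  push_cast
  field_simp
  ring

lemma sum_neg_one_pow_div_choose (n : ℕ) :
    ∑ k ∈ range (n + 1), (-1 : ℚ) ^ k / n.choose k = (n + 1) / (n + 2) * (1 + (-1) ^ n) := by
  have telescope : ∀ k ∈ range (n + 1), (-1 : ℚ) ^ k / n.choose k =
      (n + 1) / (n + 2) * ((-1) ^ k / (n + 1).choose k -
        (-1) ^ (k + 1) / (n + 1).choose (k + 1)) := fun k hk => by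
    rw [div_eq_mul_inv, inv_choose_eq_add_inv_choose (by grind : k ≤ n)]
    ring
  rw [sum_congr rfl telescope, ← mul_sum, sum_range_sub']
  simp [pow_succ]

lemma inv_sq_mul_choose_succ {n k : ℕ} (h : k ≤ n) :
    (((k + 1 : ℕ) : ℚ) ^ 2 * (n + 2).choose (k + 1))⁻¹ =
      (((k + 1 : ℕ) : ℚ) ^ 2 * (n + 1).choose (k + 1))⁻¹ -
        ((n + 1) * (n + 2) * n.choose k : ℚ)⁻¹ := by
  obtain ⟨r, rfl⟩ := Nat.exists_eq_add_of_le h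
  rw [cast_choose ℚ (by lia : k ≤ k + r), cast_choose ℚ (by lia : k + 1 ≤ k + r + 2),
    cast_choose ℚ (by lia : k + 1 ≤ k + r + 1), show k + r - k = r by lia,
    show k + r + 2 - (k + 1) = r + 1 by lia, show k + r + 1 - (k + 1) = r by lia]
  simp only [factorial_succ]
  push_cast
  field_simp
  ring

lemma sum_neg_one_pow_div_sq_mul_choose_succ (n : ℕ) :
    ∑ k ∈ Icc 1 (n + 1), (-1 : ℚ) ^ k / (k ^ 2 * (n + 2).choose k) =
      ∑ k ∈ Icc 1 (n + 1), (-1 : ℚ) ^ k / (k ^ 2 * (n + 1).choose k) +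
        (1 + (-1) ^ n) / (n + 2) ^ 2 := by
  have correction : (1 + (-1) ^ n : ℚ) / (n + 2) ^ 2 =
      ∑ k ∈ range (n + 1), -(-1) ^ (k + 1) * ((n + 1) * (n + 2) * n.choose k : ℚ)⁻¹ := by
    rw [sum_congr rfl fun k _ => show _ = ((n + 1) * (n + 2) : ℚ)⁻¹ * ((-1) ^ k / n.choose k) by
      rw [pow_succ, mul_inv, div_eq_mul_inv]; ring, ← mul_sum, sum_neg_one_pow_div_choose]
    field_simp
  simp only [← Ico_add_one_right_eq_Icc, sum_Ico_eq_sum_range, add_tsub_cancel_right]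
  rw [correction, ← sum_add_distrib]
  refine sum_congr rfl fun k hk => ?_
  rw [add_comm 1 k, div_eq_mul_inv, div_eq_mul_inv, inv_sq_mul_choose_succ (by grind : k ≤ n)]
  ring

theorem sum_neg_one_pow_div_sq_mul_choose (n : ℕ) :
    ∑ k ∈ Icc 1 n, (-1 : ℚ) ^ k / (k ^ 2 * n.choose k) = H2 n + 2 * alternatingH2 n := by
  induction n with
  | zero => simp [H2, alternatingH2]
  | succ n ih =>
    rcases n with _ | n
    · norm_num [H2, alternatingH2]
    rw [sum_Icc_succ_top (by lia), sum_neg_one_pow_div_sq_mul_choose_succ, ih, H2_succ (n + 1),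
      alternatingH2_succ (n + 1), choose_self]
    push_cast
    ring

end InverseBinomials

section EulerPolynomial

open Finset Nat PowerSeries

lemma eulerNumber_add_one (n : ℕ) :
    eulerNumber (n + 1) = -∑ j ∈ range (n + 1),
      if Even (n + 1 - j) then ((n + 1).choose j : ℚ) * eulerNumber j else 0 := by
  rw [eulerNumber, sum_attach (range (n + 1)) fun j =>
    if Even (n + 1 - j) then ((n + 1).choose (n + 1 - j) : ℚ) * eulerNumber j else 0]
  refine congrArg _ (sum_congr rfl fun j hj => ?_)
  rw [choose_symm (mem_range.mp hj).le]

lemma eulerNumber_mem (R : Subring ℚ) (n : ℕ) : eulerNumber n ∈ R := by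
  induction n using Nat.strong_induction_on with
  | _ n ih =>
    rcases n with _ | n
    · simpa only [eulerNumber] using R.one_mem
    rw [eulerNumber_add_one]
    refine R.neg_mem (R.sum_mem fun j hj => ?_)
    split_ifs
    · exact R.mul_mem (natCast_mem R _) (ih j (mem_range.mp hj))
    · exact R.zero_mem

lemma eulerNumber_eq_zero_of_odd {n : ℕ} (hn : Odd n) : eulerNumber n = 0 := by
  induction n using Nat.strong_induction_on with
  | _ n ih =>
    obtain ⟨n, rfl⟩ := Nat.exists_eq_succ_of_ne_zero hn.pos.ne'
    rw [eulerNumber_add_one, neg_eq_zero]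
    refine sum_eq_zero fun j hj => ite_eq_right_iff.mpr fun h_even => ?_
    rw [ih j (mem_range.mp hj) (by grind), mul_zero]

/-- The Euler polynomial in the centred variable `y = 2x - 1`, where its coefficients are Euler
numbers: `eulerPoly n y = 2 ^ n * Eₙ((y + 1) / 2)`. -/
def eulerPoly (n : ℕ) (y : ℚ) : ℚ :=
  ∑ j ∈ range (n + 1), (n.choose j : ℚ) * eulerNumber j * y ^ (n - j)

lemma eulerPoly_neg (n : ℕ) (y : ℚ) : eulerPoly n (-y) = (-1) ^ n * eulerPoly n y := by
  rw [eulerPoly, eulerPoly, mul_sum]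
  refine sum_congr rfl fun j hj => ?_
  rcases Nat.even_or_odd j with h_even | h_odd
  · have h_sign : (-1 : ℚ) ^ n = (-1) ^ (n - j) := by
      rw [← Nat.sub_add_cancel (mem_range_succ_iff.mp hj), pow_add, h_even.neg_one_pow]
      simp
    rw [neg_pow, h_sign]
    ring
  · simp [eulerNumber_eq_zero_of_odd h_odd]

lemma eulerPoly_one_add_eulerPoly_neg_one {n : ℕ} (hn : n ≠ 0) :
    eulerPoly n 1 + eulerPoly n (-1) = 0 := by
  obtain ⟨n, rfl⟩ := Nat.exists_eq_succ_of_ne_zero hn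
  have h_term : ∀ j, (n + 1).choose j * eulerNumber j * 1 ^ (n + 1 - j) +
      (n + 1).choose j * eulerNumber j * (-1) ^ (n + 1 - j) =
        2 * if Even (n + 1 - j) then ((n + 1).choose j : ℚ) * eulerNumber j else 0 := fun j => by
    split_ifs with h
    · rw [h.neg_one_pow]; ring
    · rw [(Nat.not_even_iff_odd.mp h).neg_one_pow]; ring
  rw [eulerPoly, eulerPoly, ← sum_add_distrib, sum_congr rfl fun j _ => h_term j, ← mul_sum,
    sum_range_succ, Nat.sub_self, if_pos Even.zero, choose_self, cast_one, one_mul,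
    eulerNumber_add_one n, add_neg_cancel, mul_zero]

/-- The exponential generating function of the Euler numbers, that is `sech`. -/
def eulerEGF : ℚ⟦X⟧ := PowerSeries.mk fun n => eulerNumber n / n !

lemma coeff_eulerEGF_mul_rescale_exp (n : ℕ) (y : ℚ) :
    coeff n (eulerEGF * rescale y (exp ℚ)) = eulerPoly n y / n ! := by
  rw [coeff_mul, Finset.Nat.sum_antidiagonal_eq_sum_range_succ_mk, eulerPoly, sum_div]
  refine sum_congr rfl fun j hj => ?_
  rw [cast_choose ℚ (mem_range_succ_iff.mp hj), eulerEGF, coeff_mk, coeff_rescale, coeff_exp,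
    Algebra.algebraMap_self, RingHom.id_apply]
  field_simp

lemma eulerEGF_mul_exp_add_exp_neg :
    eulerEGF * (rescale 1 (exp ℚ) + rescale (-1) (exp ℚ)) = 2 := by
  ext n
  rw [mul_add, map_add, coeff_eulerEGF_mul_rescale_exp, coeff_eulerEGF_mul_rescale_exp, ← add_div,
    ← map_ofNat C 2, coeff_C]
  rcases eq_or_ne n 0 with rfl | hn
  · norm_num [eulerPoly, eulerNumber]
  · rw [eulerPoly_one_add_eulerPoly_neg_one hn, zero_div, if_neg hn]

theorem eulerPoly_add_one_add_eulerPoly_sub_one (n : ℕ) (y : ℚ) :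
    eulerPoly n (y + 1) + eulerPoly n (y - 1) = 2 * y ^ n := by
  have egf_eq : eulerEGF * rescale (y + 1) (exp ℚ) + eulerEGF * rescale (y - 1) (exp ℚ) =
      2 * rescale y (exp ℚ) := by
    rw [sub_eq_add_neg, ← exp_mul_exp_eq_exp_add, ← exp_mul_exp_eq_exp_add,
      ← eulerEGF_mul_exp_add_exp_neg]
    ring
  have coeff_eq := congrArg (coeff n) egf_eq
  rw [map_add, coeff_eulerEGF_mul_rescale_exp, coeff_eulerEGF_mul_rescale_exp, ← map_ofNat C 2,
    coeff_C_mul, coeff_rescale, coeff_exp, Algebra.algebraMap_self, RingHom.id_apply] at coeff_eq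
  field_simp at coeff_eq
  exact coeff_eq

theorem two_mul_sum_neg_one_pow_mul_pow {n : ℕ} (hn : n ≠ 0) (h_even : Even n) (m : ℕ) :
    2 * ∑ k ∈ Icc 1 m, (-1 : ℚ) ^ k * (2 * k) ^ n = (-1) ^ m * eulerPoly n (2 * m + 1) := by
  induction m with
  | zero =>
    have h_one := eulerPoly_one_add_eulerPoly_neg_one hn
    rw [eulerPoly_neg, h_even.neg_one_pow] at h_one
    norm_num
    linarith
  | succ m ih =>
    have h_step := eulerPoly_add_one_add_eulerPoly_sub_one n (2 * (m + 1))
    rw [show (2 * (m + 1) - 1 : ℚ) = 2 * m + 1 by ring] at h_step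
    rw [sum_Icc_succ_top (by lia), mul_add, ih]
    push_cast
    linear_combination (-1) ^ (m + 1) * -h_step

end EulerPolynomial

section LocalIntegers

variable {m : ℕ} {a b c d x : ℚ}

/-- The ring of `m`-integral rationals: those whose reduced denominator is coprime to `m`. For a
prime `p` and `r ≠ 0`, `localIntegers (p ^ r)` is the localization of `ℤ` at `p`. -/
def localIntegers (m : ℕ) : Subring ℚ where
  carrier := {x | x.den.Coprime m}
  mul_mem' hx hy := (hx.mul_left hy).of_dvd_left (Rat.mul_den_dvd _ _)
  one_mem' := Nat.coprime_one_left m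
  add_mem' hx hy := (hx.mul_left hy).of_dvd_left (Rat.add_den_dvd _ _)
  zero_mem' := Nat.coprime_one_left m
  neg_mem' hx := by rwa [Set.mem_ofPred_eq, Rat.neg_den]

lemma mem_localIntegers : x ∈ localIntegers m ↔ x.den.Coprime m := Iff.rfl

lemma localIntegers_le_pow (m r : ℕ) : localIntegers m ≤ localIntegers (m ^ r) :=
  fun _ hx => Nat.Coprime.pow_right r hx

lemma inv_natCast_mem_localIntegers {n : ℕ} (h : n.Coprime m) :
    (n : ℚ)⁻¹ ∈ localIntegers m := by
  rw [mem_localIntegers, Rat.inv_natCast_den]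
  split_ifs
  · exact Nat.coprime_one_left m
  · exact h

theorem ratModEq_iff : ratModEq m a b ↔ ∃ z ∈ localIntegers m, a - b = m * z := by
  constructor
  · rintro ⟨c, hc⟩
    have den_coprime : (a - b).den.Coprime m :=
      (a - b).reduced.symm.of_dvd_right (Int.natCast_dvd.mp ⟨c, hc⟩)
    refine ⟨c * ((a - b).den : ℚ)⁻¹, mul_mem (intCast_mem _ c)
      (inv_natCast_mem_localIntegers den_coprime), ?_⟩
    nth_rewrite 1 [← Rat.num_div_den (a - b)]
    rw [hc, div_eq_mul_inv]
    push_cast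
    ring
  · rintro ⟨z, hz, h⟩
    have num_mul_den : (a - b).num * z.den = m * (z.num * (a - b).den) := by
      qify
      rw [← Rat.mul_den_eq_num, ← Rat.mul_den_eq_num]
      linear_combination ((a - b).den * z.den : ℚ) * h
    exact (Nat.Coprime.isCoprime hz).symm.dvd_of_dvd_mul_right ⟨_, num_mul_den⟩

lemma ratModEq_of_intModEq {a b : ℤ} (h : a ≡ b [ZMOD m]) : ratModEq m a b := by
  rw [ratModEq, ← Int.cast_sub, Rat.num_intCast]
  exact h.symm.dvd

lemma ratModEq.of_dvd {n : ℕ} (hnm : n ∣ m) (h : ratModEq m a b) : ratModEq n a b :=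
  (Int.natCast_dvd_natCast.mpr hnm).trans h

lemma ratModEq.trans (h₁ : ratModEq m a b) (h₂ : ratModEq m b c) : ratModEq m a c := by
  obtain ⟨y, hy, h₁⟩ := ratModEq_iff.mp h₁
  obtain ⟨z, hz, h₂⟩ := ratModEq_iff.mp h₂
  exact ratModEq_iff.mpr ⟨y + z, add_mem hy hz, by linear_combination h₁ + h₂⟩

lemma ratModEq.const_add (c : ℚ) (h : ratModEq m a b) : ratModEq m (c + a) (c + b) := by
  rwa [ratModEq, add_sub_add_left_eq_sub]

lemma ratModEq.sum {ι : Type*} {s : Finset ι} {f g : ι → ℚ}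
    (h : ∀ i ∈ s, ratModEq m (f i) (g i)) : ratModEq m (∑ i ∈ s, f i) (∑ i ∈ s, g i) := by
  choose! z hz h using fun i hi => ratModEq_iff.mp (h i hi)
  refine ratModEq_iff.mpr ⟨∑ i ∈ s, z i, sum_mem hz, ?_⟩
  rw [← Finset.sum_sub_distrib, Finset.sum_congr rfl h, Finset.mul_sum]

lemma ratModEq.mul_left (hc : c ∈ localIntegers m) (h : ratModEq m a b) :
    ratModEq m (c * a) (c * b) := by
  obtain ⟨z, hz, h⟩ := ratModEq_iff.mp h
  exact ratModEq_iff.mpr ⟨c * z, mul_mem hc hz, by linear_combination c * h⟩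

lemma ratModEq.mul (hb : b ∈ localIntegers m) (hd : d ∈ localIntegers m) (h₁ : ratModEq m a b)
    (h₂ : ratModEq m c d) : ratModEq m (a * c) (b * d) := by
  obtain ⟨y, hy, h₁⟩ := ratModEq_iff.mp h₁
  obtain ⟨z, hz, h₂⟩ := ratModEq_iff.mp h₂
  refine ratModEq_iff.mpr ⟨y * (d + m * z) + b * z,
    add_mem (mul_mem hy (add_mem hd (mul_mem (natCast_mem _ m) hz))) (mul_mem hb hz), ?_⟩
  linear_combination c * h₁ + (b + m * y) * h₂

lemma ratModEq.pow_mul {r : ℕ} (h : ratModEq (m ^ (r + 1)) a b) (s : ℕ) :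
    ratModEq (m ^ (r + 1 + s)) (m ^ s * a) (m ^ s * b) := by
  obtain ⟨z, hz, h⟩ := ratModEq_iff.mp h
  have hz' := localIntegers_le_pow m (r + 1 + s)
    ((Nat.coprime_pow_right_iff r.succ_pos _ _).mp hz)
  refine ratModEq_iff.mpr ⟨z, hz', ?_⟩
  push_cast at h ⊢
  linear_combination m ^ s * h

lemma ratModEq_intCast_div {p u v : ℕ} {a b : ℤ} (hp : p.Prime) (hu : ¬p ∣ u) (hv : ¬p ∣ v)
    (h : a * v ≡ b * u [ZMOD p]) : ratModEq p (a / u) (b / v) := by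
  have inv_mem : ∀ {n : ℕ}, ¬p ∣ n → (n : ℚ)⁻¹ ∈ localIntegers p := fun hn =>
    inv_natCast_mem_localIntegers (hp.coprime_iff_not_dvd.mpr hn).symm
  have hu₀ : (u : ℚ) ≠ 0 := fun h₀ => hu (Nat.cast_eq_zero.mp h₀ ▸ dvd_zero p)
  have hv₀ : (v : ℚ) ≠ 0 := fun h₀ => hv (Nat.cast_eq_zero.mp h₀ ▸ dvd_zero p)
  have h_mul := (ratModEq_of_intModEq h).mul_left (mul_mem (inv_mem hu) (inv_mem hv))
  push_cast at h_mul
  convert h_mul using 1 <;> field_simp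

end LocalIntegers

section Congruences

open Finset Nat

variable {p : ℕ}

lemma choose_sub_one_modEq_neg_one_pow (hp : p.Prime) {k : ℕ} (hk : k < p) :
    ((p - 1).choose k : ℤ) ≡ (-1) ^ k [ZMOD p] := by
  induction k with
  | zero => simp
  | succ k ih =>
    have pascal : (p.choose (k + 1) : ℤ) = (p - 1).choose k + (p - 1).choose (k + 1) := by
      rw [← Nat.cast_add, ← choose_succ_succ', Nat.sub_add_cancel hp.one_le]
    have dvd_choose : (p.choose (k + 1) : ℤ) ≡ 0 [ZMOD p] :=
      (Int.natCast_dvd_natCast.mpr (hp.dvd_choose_self k.succ_ne_zero hk)).modEq_zero_int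
    have := dvd_choose.sub (ih (by lia))
    rwa [pascal, add_sub_cancel_left, zero_sub, ← mul_neg_one, ← pow_succ] at this

lemma choose_prime_add_modEq (hp : p.Prime) {n k : ℕ} (hn : n < p) (hk : k < p) :
    (p + n).choose k ≡ n.choose k [MOD p] := by
  have := Fact.mk hp
  simpa [mod_eq_of_lt hn, mod_eq_of_lt hk, div_eq_of_lt hk] using
    Choose.choose_modEq_choose_mod_mul_choose_div_nat (p := p) (n := p + n) (k := k)

lemma not_dvd_choose_of_lt (hp : p.Prime) {n k : ℕ} (hk : k ≤ n) (hn : n < p) :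
    ¬p ∣ n.choose k := fun h =>
  hn.not_ge <| hp.dvd_factorial.mp <| h.trans
    ⟨k ! * (n - k)!, by rw [← mul_assoc, choose_mul_factorial_mul_factorial hk]⟩

lemma one_div_sq_mem_localIntegers (hp : p.Prime) {k : ℕ} (hk₀ : k ≠ 0) (hk : k < p) :
    (1 / k ^ 2 : ℚ) ∈ localIntegers p := by
  rw [one_div, ← inv_pow]
  exact pow_mem (inv_natCast_mem_localIntegers (coprime_of_lt_prime hk₀ hk hp).symm) 2

lemma H2_mem_localIntegers (hp : p.Prime) {n : ℕ} (hn : n < p) : H2 n ∈ localIntegers p :=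
  sum_mem fun k hk => one_div_sq_mem_localIntegers hp (by grind) (by grind)

lemma alternatingH2_mem_localIntegers (hp : p.Prime) {n : ℕ} (hn : n < p) :
    alternatingH2 n ∈ localIntegers p :=
  sum_mem fun k hk => by
    rw [← mul_one_div]
    exact mul_mem (pow_mem (neg_mem (one_mem _)) k)
      (one_div_sq_mem_localIntegers hp (by grind) (by grind))

lemma neg_one_pow_mul_choose_mul_choose (N n : ℕ) :
    ((-1) ^ n * N.choose n * (N + 1 + n).choose n : ℚ) =
      ∏ k ∈ Icc 1 n, (1 - ((N + 1 : ℕ) : ℚ) ^ 2 * (1 / k ^ 2)) := by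
  induction n with
  | zero => simp
  | succ n ih =>
    have choose_left : (N.choose (n + 1) * (n + 1) : ℚ) = N.choose n * (N - n) := by
      rcases le_or_gt n N with h | h
      · exact mod_cast choose_succ_right_eq N n
      · simp [choose_eq_zero_of_lt h, choose_eq_zero_of_lt (h.trans n.lt_succ_self)]
    have choose_right : ((N + 1 + (n + 1)).choose (n + 1) * (n + 1) : ℚ) =
        (N + 1 + n).choose n * (N + n + 2) := by
      have := add_one_mul_choose_eq (N + 1 + n) n
      qify at this
      rw [← add_assoc (N + 1) n 1]
      linear_combination -this
    rw [prod_Icc_succ_top (by lia), ← ih, pow_succ]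
    push_cast
    field_simp
    linear_combination
      -((N + 1 + (n + 1)).choose (n + 1) * (n + 1) : ℚ) * choose_left -
        (N.choose n * (N - n) : ℚ) * choose_right

lemma prod_one_sub_mul_modEq {ι : Type*} {m : ℕ} {s : Finset ι} {x : ι → ℚ}
    (hx : ∀ i ∈ s, x i ∈ localIntegers (m ^ 2)) :
    ratModEq (m ^ 2) (∏ i ∈ s, (1 - m * x i)) (1 - m * ∑ i ∈ s, x i) := by
  classical
  induction s using Finset.induction_on with
  | empty => simp [ratModEq]
  | insert i s hi ih =>
    simp only [forall_mem_insert] at hx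
    rw [prod_insert hi, sum_insert hi]
    refine ((ih hx.2).mul_left ?_).trans (ratModEq_iff.mpr
      ⟨x i * ∑ j ∈ s, x j, mul_mem hx.1 (sum_mem hx.2), by push_cast; ring⟩)
    exact sub_mem (one_mem _) (mul_mem (natCast_mem _ m) hx.1)

theorem neg_one_pow_mul_choose_mul_choose_modEq (hp : p.Prime) {n : ℕ} (hn : n < p) :
    ratModEq (p ^ 4) ((-1) ^ n * (p - 1).choose n * (p + n).choose n) (1 - p ^ 2 * H2 n) := by
  have h_mem : ∀ k ∈ Icc 1 n, (1 / k ^ 2 : ℚ) ∈ localIntegers ((p ^ 2) ^ 2) := fun k hk =>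
    localIntegers_le_pow _ _ (localIntegers_le_pow _ _
      (one_div_sq_mem_localIntegers hp (by grind) (by grind)))
  have h_prod := prod_one_sub_mul_modEq h_mem
  have h_exact := neg_one_pow_mul_choose_mul_choose (p - 1) n
  rw [Nat.sub_add_cancel hp.one_le] at h_exact
  rwa [Nat.cast_pow, ← h_exact, ← pow_mul] at h_prod

lemma sq_choose_prime_div_choose_modEq (hp : p.Prime) {n k : ℕ} (hk₀ : k ≠ 0) (hk : k ≤ n)
    (hn : n < p) :
    ratModEq (p ^ 3) ((p.choose k : ℚ) ^ 2 / (p + n).choose k)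
      (p ^ 2 * (1 / k ^ 2 * (1 / n.choose k))) := by
  obtain ⟨k, rfl⟩ := Nat.exists_eq_succ_of_ne_zero hk₀
  have h_lucas := choose_prime_add_modEq hp hn (hk.trans_lt hn)
  have h_not_dvd := not_dvd_choose_of_lt hp hk hn
  have h_sq : ((p - 1).choose k : ℤ) ^ 2 ≡ 1 [ZMOD p] := by
    have := (choose_sub_one_modEq_neg_one_pow hp (by lia : k < p)).pow 2
    rwa [pow_right_comm, neg_one_sq, one_pow] at this
  have h_quot : ratModEq (p ^ 1) (((p - 1).choose k : ℚ) ^ 2 / (p + n).choose (k + 1))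
      (1 / n.choose (k + 1)) := by
    rw [pow_one]
    simpa only [Int.cast_pow, Int.cast_natCast, Int.cast_one] using
      ratModEq_intCast_div hp (mt (h_lucas.dvd_iff dvd_rfl).mp h_not_dvd) h_not_dvd
        (h_sq.mul (Int.natCast_modEq_iff.mpr h_lucas.symm))
  have h_absorb : (p.choose (k + 1) * (k + 1) : ℚ) = p * (p - 1).choose k := by
    have := add_one_mul_choose_eq (p - 1) k
    rw [Nat.sub_add_cancel hp.one_le] at this
    exact mod_cast this.symm
  have h_inv_sq := localIntegers_le_pow p 1 (one_div_sq_mem_localIntegers hp hk₀ (by lia))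
  convert (h_quot.mul_left h_inv_sq).pow_mul 2 using 1
  rw [eq_div_of_mul_eq (by positivity) h_absorb, div_pow]
  push_cast
  ring

theorem sum_neg_one_pow_mul_sq_choose_div_choose_modEq (hp : p.Prime) {n : ℕ} (hn : n < p) :
    ratModEq (p ^ 3) (∑ k ∈ Icc 1 n, (-1) ^ k * (p.choose k : ℚ) ^ 2 / (p + n).choose k)
      (p ^ 2 * (H2 n + 2 * alternatingH2 n)) := by
  rw [← sum_neg_one_pow_div_sq_mul_choose, mul_sum]
  refine ratModEq.sum fun k hk => ?_
  convert (sq_choose_prime_div_choose_modEq hp (by grind) (by grind : k ≤ n) hn).mul_left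
    (pow_mem (neg_mem (one_mem _)) k) using 1 <;> ring

lemma eulerPoly_natCast_modEq (m n : ℕ) : ratModEq m (eulerPoly n m) (eulerNumber n) := by
  refine ratModEq_iff.mpr
    ⟨∑ j ∈ range n, n.choose j * eulerNumber j * m ^ (n - j - 1), sum_mem fun j _ => ?_, ?_⟩
  · exact mul_mem (mul_mem (natCast_mem _ _) (eulerNumber_mem _ j)) (pow_mem (natCast_mem _ m) _)
  · rw [eulerPoly, sum_range_succ, choose_self, Nat.sub_self, cast_one, one_mul, pow_zero, mul_one,
      add_sub_cancel_right, mul_sum]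
    refine sum_congr rfl fun j hj => ?_
    rw [← Nat.sub_add_cancel (Nat.sub_pos_of_lt (mem_range.mp hj)), pow_succ, add_tsub_cancel_right]
    ring

lemma one_div_sq_modEq_pow_sub_three (hp : p.Prime) (hp2 : 2 < p) {x : ℕ} (hx : ¬p ∣ x) :
    ratModEq p (1 / x ^ 2) (x ^ (p - 3)) := by
  have fermat : (1 : ℤ) * (1 : ℕ) ≡ x ^ (p - 3) * (x ^ 2 : ℕ) [ZMOD p] := by
    rw [Nat.cast_one, mul_one, Nat.cast_pow, ← pow_add, show p - 3 + 2 = p - 1 by lia]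
    exact (Int.ModEq.pow_card_sub_one_eq_one hp
      (Nat.isCoprime_iff_coprime.mpr (hp.coprime_iff_not_dvd.mpr hx).symm)).symm
  simpa only [Int.cast_one, Int.cast_pow, Int.cast_natCast, Nat.cast_pow, Nat.cast_one, div_one]
    using ratModEq_intCast_div hp (mt hp.dvd_of_dvd_pow hx) hp.not_dvd_one fermat

theorem alternatingH2_modEq_eulerNumber {n : ℕ} (hp : p.Prime) (hp3 : 3 < p)
    (hpn : p = 2 * n + 1) :
    ratModEq p (alternatingH2 n) (2 * (-1) ^ n * eulerNumber (p - 3)) := by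
  have h_term : ∀ k ∈ Icc 1 n, ratModEq p ((-1) ^ k / k ^ 2)
      (4 * (-1) ^ k * (2 * k : ℚ) ^ (p - 3)) := fun k hk => by
    have h_not_dvd : ¬p ∣ 2 * k := fun h => absurd (Nat.le_of_dvd (by grind) h) (by grind)
    convert (one_div_sq_modEq_pow_sub_three hp (by lia) h_not_dvd).mul_left
      (c := 4 * (-1) ^ k) (mul_mem (ofNat_mem _ 4) (pow_mem (neg_mem (one_mem _)) k)) using 1
    · push_cast; ring
    · push_cast; ring
  have h_sum : ∑ k ∈ Icc 1 n, 4 * (-1) ^ k * (2 * k : ℚ) ^ (p - 3) =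
      2 * (-1) ^ n * eulerPoly (p - 3) p := by
    have := two_mul_sum_neg_one_pow_mul_pow (n := p - 3) (by lia) (by grind) n
    simp only [mul_assoc, ← mul_sum] at this ⊢
    rw [← show (p : ℚ) = 2 * n + 1 from mod_cast hpn] at this
    linear_combination 2 * this
  refine (ratModEq.sum h_term).trans ?_
  rw [h_sum]
  exact (eulerPoly_natCast_modEq p (p - 3)).mul_left
    (mul_mem (ofNat_mem _ 2) (pow_mem (neg_mem (one_mem _)) n))

theorem neg_one_pow_mul_choose_mul_choose_mul_one_add_sum_modEq (hp : p.Prime) {n : ℕ}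
    (hn : n < p) :
    ratModEq (p ^ 3) (((-1) ^ n * (p - 1).choose n * (p + n).choose n) *
        (1 + ∑ k ∈ Icc 1 n, (-1) ^ k * (p.choose k : ℚ) ^ 2 / (p + n).choose k))
      (1 + 2 * (p ^ 2 * alternatingH2 n)) := by
  have h_mem {x : ℚ} (hx : x ∈ localIntegers p) : x ∈ localIntegers (p ^ 3) :=
    localIntegers_le_pow p 3 hx
  have hp_mem : (p : ℚ) ∈ localIntegers p := natCast_mem _ p
  have hH := H2_mem_localIntegers hp hn
  have hHA : H2 n + 2 * alternatingH2 n ∈ localIntegers p :=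
    add_mem hH (mul_mem (ofNat_mem _ 2) (alternatingH2_mem_localIntegers hp hn))
  have h_prod := ((neg_one_pow_mul_choose_mul_choose_modEq hp hn).of_dvd
      (pow_dvd_pow p (by lia : 3 ≤ 4))).mul
    (h_mem (sub_mem (one_mem _) (mul_mem (pow_mem hp_mem 2) hH)))
    (h_mem (add_mem (one_mem _) (mul_mem (pow_mem hp_mem 2) hHA)))
    ((sum_neg_one_pow_mul_sq_choose_div_choose_modEq hp hn).const_add 1)
  exact h_prod.trans (ratModEq_iff.mpr ⟨-p * H2 n * (H2 n + 2 * alternatingH2 n),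
    h_mem (mul_mem (mul_mem (neg_mem hp_mem) hH) hHA), by push_cast; ring⟩)

end Congruences

theorem stmt7 (p : ℕ) (hp : p.Prime) (hp3 : 3 < p) :
    ratModEq (p ^ 4)
      (∑ k ∈ Finset.range ((p - 1) / 2 + 1), (21 * k + 8 : ℚ) * ((2 * k).choose k : ℚ) ^ 3)
      (8 * p + (-1) ^ ((p - 1) / 2) * 32 * p ^ 3 * eulerNumber (p - 3)) := by
  obtain ⟨n, hpn⟩ := hp.odd_of_ne_two (by lia)
  have h_wz := sum_mul_centralBinom_cube n
  simp only [Nat.centralBinom_eq_two_mul_choose] at h_wz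
  rw [show 3 * n + 1 = p + n by lia, ← hpn, show 2 * n = p - 1 by lia,
    show (2 * n + 1 : ℚ) = p from mod_cast hpn.symm] at h_wz
  have h_euler : ratModEq (p ^ 1) (alternatingH2 n) (2 * (-1) ^ n * eulerNumber (p - 3)) :=
    (pow_one p).symm ▸ alternatingH2_modEq_eulerNumber hp hp3 hpn
  have h_product := (neg_one_pow_mul_choose_mul_choose_mul_one_add_sum_modEq hp
    (by lia : n < p)).trans (((h_euler.pow_mul 2).mul_left (ofNat_mem _ 2)).const_add 1)
  rw [show (p - 1) / 2 = n by lia, h_wz]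
  convert (h_product.mul_left (ofNat_mem _ 8)).pow_mul 1 using 1 <;> ring
end

section
/- Let p > 3 be a prime. Then ∑_{k=1}^{(p-1)/2} (21k − 8)/(k³ · C(2k,k)³) ≡ (-1)^{(p+1)/2} · 4·E_{p-3} (mod p). -/
/-!
Two identities hold in every field in which `(2n)!` is invertible. Zeilberger's WZ pair gives
`∑ (21k - 8) / (k³ C(2k, k)³) = ∑ 1 / (C(2n, n) k² C(n+k, k)²) + 3 ∑ 1 / (k² C(2k, k))`, and
Apéry's telescoping gives
`2 ∑ (-1)ᵏ / k² + 3 ∑ 1 / (k² C(2k, k)) = -(-1)ⁿ ∑ (-1)ᵏ / (k² C(n, k) C(n+k, k))`, all sums being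
over `1 ≤ k ≤ n`. If `2n + 1 = 0` then `C(n+k, k) = (-1)ᵏ C(n, k)`, so the two sums involving
`C(n+k, k)` cancel and the left-hand side of the first identity is `-2 ∑ (-1)ᵏ / k²`.

The polynomials `Aₙ` with exponential generating function `exp (xt) / cosh t` satisfy
`Aₙ(x + 1) + Aₙ(x - 1) = 2xⁿ` and `Aₙ(0) = Eₙ`. Telescoping from `1` to `2m + 1` evaluates `Eₙ`
modulo `2m + 1` as an alternating sum of `n`-th powers; for `n = p - 3` these are inverse squares by
Fermat's little theorem.
-/

open Finset
open scoped Nat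

section EulerNumbers

open PowerSeries

theorem eulerNumber_zero : eulerNumber 0 = 1 := by rw [eulerNumber]

theorem eulerNumber_succ (n : ℕ) :
    eulerNumber (n + 1) = -∑ j ∈ range (n + 1),
      if Even (n + 1 - j) then ((n + 1).choose (n + 1 - j) : ℚ) * eulerNumber j else 0 := by
  rw [eulerNumber, ← sum_attach (range (n + 1))]

theorem coe_num_eulerNumber (n : ℕ) : ((eulerNumber n).num : ℚ) = eulerNumber n := by
  suffices h : eulerNumber n ∈ (Int.castRingHom ℚ).range by
    obtain ⟨z, hz⟩ := h
    rw [← hz, eq_intCast, Rat.num_intCast]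
  induction n using Nat.strong_induction_on with
  | _ n ih =>
    cases n with
    | zero => exact eulerNumber_zero ▸ one_mem _
    | succ n =>
      rw [eulerNumber_succ]
      refine neg_mem (sum_mem fun j hj => ?_)
      split_ifs
      · exact mul_mem (natCast_mem _ _) (ih j (mem_range.1 hj))
      · exact zero_mem _

theorem sum_range_even_choose_mul_eulerNumber {n : ℕ} (hn : n ≠ 0) :
    ∑ j ∈ range (n + 1), (if Even (n - j) then (n.choose j : ℚ) * eulerNumber j else 0) = 0 := by
  obtain ⟨n, rfl⟩ := Nat.exists_eq_succ_of_ne_zero hn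
  rw [sum_range_succ, Nat.sub_self, if_pos Even.zero, Nat.choose_self, Nat.cast_one, one_mul,
    eulerNumber_succ, add_neg_eq_zero]
  refine sum_congr rfl fun j hj => ?_
  rw [Nat.choose_symm (mem_range.1 hj).le]

/-- The exponential generating function of the Euler numbers, i.e. `1 / cosh`. -/
def eulerPowerSeries : ℚ⟦X⟧ := mk fun n => eulerNumber n / n !

/-- The polynomials with exponential generating function `exp (x t) / cosh t`: in terms of the
Euler polynomials, `eulerAppell n x = 2 ^ n * E_n ((x + 1) / 2)`. -/
def eulerAppell (n : ℕ) (x : ℚ) : ℚ :=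
  ∑ j ∈ range (n + 1), n.choose j * eulerNumber j * x ^ (n - j)

theorem mk_eulerAppell_div_factorial (x : ℚ) :
    mk (fun n => eulerAppell n x / n !) = eulerPowerSeries * rescale x (exp ℚ) := by
  ext n
  simp only [eulerPowerSeries, eulerAppell, coeff_mk, coeff_mul, coeff_rescale, coeff_exp,
    sum_div, Nat.sum_antidiagonal_eq_sum_range_succ_mk, eq_ratCast, Rat.cast_id]
  refine sum_congr rfl fun j hj => ?_
  rw [Nat.cast_choose ℚ (mem_range_succ_iff.1 hj)]
  field_simp

theorem eulerAppell_one_add_eulerAppell_neg_one (n : ℕ) :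
    eulerAppell n 1 + eulerAppell n (-1) = 2 * 0 ^ n := by
  obtain rfl | hn := eq_or_ne n 0
  · norm_num [eulerAppell, eulerNumber_zero]
  · rw [zero_pow hn, mul_zero, ← mul_zero 2, ← sum_range_even_choose_mul_eulerNumber hn, mul_sum,
      eulerAppell, eulerAppell, ← sum_add_distrib]
    refine sum_congr rfl fun j _ => ?_
    rw [one_pow]
    split_ifs with h
    · rw [h.neg_one_pow]; ring
    · rw [(Nat.not_even_iff_odd.1 h).neg_one_pow]; ring

theorem eulerPowerSeries_mul_exp_add_exp_neg :
    eulerPowerSeries * (exp ℚ + rescale (-1) (exp ℚ)) = 2 := by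
  have h : eulerPowerSeries * exp ℚ = mk fun n => eulerAppell n 1 / n ! := by
    rw [mk_eulerAppell_div_factorial, rescale_one, RingHom.id_apply]
  rw [mul_add, h, ← mk_eulerAppell_div_factorial]
  ext n
  rw [map_add, coeff_mk, coeff_mk, ← add_div, eulerAppell_one_add_eulerAppell_neg_one,
    ← map_ofNat C 2, coeff_C]
  cases n <;> simp

theorem eulerAppell_add_one_add_eulerAppell_sub_one (n : ℕ) (x : ℚ) :
    eulerAppell n (x + 1) + eulerAppell n (x - 1) = 2 * x ^ n := by
  have h : mk (fun n => eulerAppell n (x + 1) / n !) + mk (fun n => eulerAppell n (x - 1) / n !) =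
      2 * rescale x (exp ℚ) := by
    have hexp (y : ℚ) : rescale (x + y) (exp ℚ) = rescale x (exp ℚ) * rescale y (exp ℚ) :=
      (exp_mul_exp_eq_exp_add x y).symm
    rw [mk_eulerAppell_div_factorial, mk_eulerAppell_div_factorial, sub_eq_add_neg, hexp, hexp,
      rescale_one, RingHom.id_apply, ← eulerPowerSeries_mul_exp_add_exp_neg]
    ring
  have hn := congrArg (coeff n) h
  rw [map_add, coeff_mk, coeff_mk, ← map_ofNat C 2, coeff_C_mul, coeff_rescale, coeff_exp,
    eq_ratCast, Rat.cast_id] at hn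
  field_simp at hn
  exact hn

theorem rescale_neg_one_eulerPowerSeries : rescale (-1) eulerPowerSeries = eulerPowerSeries := by
  have h := congrArg (rescale (-1)) eulerPowerSeries_mul_exp_add_exp_neg
  rw [map_mul, map_add, rescale_rescale, neg_one_mul, neg_neg, rescale_one, RingHom.id_apply,
    add_comm, map_ofNat, ← eulerPowerSeries_mul_exp_add_exp_neg] at h
  refine mul_right_cancel₀ (fun h0 => ?_) h
  have h1 := congrArg (coeff 0) h0
  rw [map_add, coeff_rescale, coeff_exp] at h1
  norm_num at h1

theorem eulerAppell_neg (n : ℕ) (x : ℚ) : eulerAppell n (-x) = (-1) ^ n * eulerAppell n x := by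
  have h : mk (fun n => eulerAppell n (-x) / n !) =
      rescale (-1) (mk fun n => eulerAppell n x / n !) := by
    rw [mk_eulerAppell_div_factorial, mk_eulerAppell_div_factorial, map_mul,
      rescale_neg_one_eulerPowerSeries, rescale_rescale, mul_neg_one]
  have hn := congrArg (coeff n) h
  rw [coeff_rescale, coeff_mk, coeff_mk] at hn
  field_simp at hn
  exact hn

theorem eulerAppell_one_of_even {n : ℕ} (hn : n ≠ 0) (heven : Even n) : eulerAppell n 1 = 0 := by
  have h := eulerAppell_one_add_eulerAppell_neg_one n
  rw [eulerAppell_neg, heven.neg_one_pow, zero_pow hn] at h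
  linarith

theorem eulerAppell_two_mul_add_one {n : ℕ} (hn : n ≠ 0) (heven : Even n) (m : ℕ) :
    eulerAppell n (2 * m + 1) = 2 * (-1) ^ m * ∑ k ∈ Icc 1 m, (-1) ^ k * (2 * (k : ℚ)) ^ n := by
  induction m with
  | zero => simp [eulerAppell_one_of_even hn heven]
  | succ m ih =>
    have h := eulerAppell_add_one_add_eulerAppell_sub_one n (2 * (m + 1))
    rw [show 2 * ((m : ℚ) + 1) - 1 = 2 * m + 1 by ring, ih] at h
    rw [sum_Icc_succ_top (by omega)]
    have hsign : ((-1 : ℚ) ^ m) ^ 2 = 1 := by rw [pow_right_comm, neg_one_sq, one_pow]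
    push_cast
    rw [pow_succ]
    linear_combination h - 2 * (2 * ((m : ℚ) + 1)) ^ n * hsign

theorem num_eulerNumber_modEq {n : ℕ} (hn : n ≠ 0) (heven : Even n) (m : ℕ) :
    (eulerNumber n).num ≡
      2 * (-1) ^ m * ∑ k ∈ Icc 1 m, (-1) ^ k * (2 * (k : ℤ)) ^ n [ZMOD 2 * m + 1] := by
  have h : ∑ j ∈ range (n + 1), n.choose j * (eulerNumber j).num * (2 * (m : ℤ) + 1) ^ (n - j) =
      2 * (-1) ^ m * ∑ k ∈ Icc 1 m, (-1) ^ k * (2 * (k : ℤ)) ^ n := by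
    qify
    simpa only [eulerAppell, coe_num_eulerNumber] using eulerAppell_two_mul_add_one hn heven m
  rw [← h, sum_range_succ, Nat.choose_self, Nat.sub_self, pow_zero, Nat.cast_one, one_mul, mul_one,
    Int.modEq_iff_dvd, add_sub_cancel_right]
  refine dvd_sum fun j hj => dvd_mul_of_dvd_right (dvd_pow_self _ ?_) _
  exact Nat.sub_ne_zero_of_lt (mem_range.1 hj)

end EulerNumbers

section Reduction

variable {K : Type*} [DivisionRing K]

theorem den_add_ne_zero {a b : ℚ} (ha : (a.den : K) ≠ 0) (hb : (b.den : K) ≠ 0) :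
    ((a + b).den : K) ≠ 0 := by
  obtain ⟨d, hd⟩ := Rat.add_den_dvd a b
  have hab : ((a.den * b.den : ℕ) : K) ≠ 0 := by
    rw [Nat.cast_mul]
    exact mul_ne_zero ha hb
  rw [hd, Nat.cast_mul] at hab
  exact left_ne_zero_of_mul hab

theorem den_sum_ne_zero {ι : Type*} {s : Finset ι} {f : ι → ℚ}
    (hf : ∀ i ∈ s, ((f i).den : K) ≠ 0) : ((∑ i ∈ s, f i).den : K) ≠ 0 :=
  sum_induction f (fun q => (q.den : K) ≠ 0) (fun _ _ => den_add_ne_zero) (by simp) hf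

theorem ratCast_sum_of_den_ne_zero {ι : Type*} {s : Finset ι} {f : ι → ℚ}
    (hf : ∀ i ∈ s, ((f i).den : K) ≠ 0) : ((∑ i ∈ s, f i : ℚ) : K) = ∑ i ∈ s, (f i : K) := by
  classical
  induction s using Finset.induction_on with
  | empty => simp
  | insert i s hi ih =>
    have hs : ∀ j ∈ s, ((f j).den : K) ≠ 0 := fun j hj => hf j (mem_insert_of_mem hj)
    rw [sum_insert hi, sum_insert hi,
      Rat.cast_add_of_ne_zero (hf i (mem_insert_self i s)) (den_sum_ne_zero hs), ih hs]

theorem den_intCast_div_ne_zero (a : ℤ) {b : ℤ} (hb : (b : K) ≠ 0) :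
    (((a / b : ℚ).den : ℕ) : K) ≠ 0 := by
  obtain ⟨d, hd⟩ := Rat.den_dvd a b
  rw [Rat.divInt_eq_div] at hd
  rw [hd, Int.cast_mul, Int.cast_natCast] at hb
  exact left_ne_zero_of_mul hb

theorem ratCast_intCast_div (a : ℤ) {b : ℤ} (hb : (b : K) ≠ 0) : ((a / b : ℚ) : K) = a / b := by
  rw [← Rat.divInt_eq_div, Rat.cast_divInt_of_ne_zero a hb]

theorem ratModEq_of_ratCast_eq {p : ℕ} [Fact p.Prime] {a b : ℚ} (ha : (a.den : ZMod p) ≠ 0)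
    (hb : (b.den : ZMod p) ≠ 0) (h : (a : ZMod p) = b) : ratModEq p a b := by
  have hden : ((a - b).den : ZMod p) ≠ 0 := by
    rw [sub_eq_add_neg]
    exact den_add_ne_zero ha (by rwa [Rat.neg_den])
  have hzero : ((a - b : ℚ) : ZMod p) = 0 := by rw [Rat.cast_sub_of_ne_zero ha hb, h, sub_self]
  rw [Rat.cast_def, div_eq_zero_iff, or_iff_left hden] at hzero
  exact (ZMod.intCast_zmod_eq_zero_iff_dvd _ _).1 hzero

theorem ratModEq_sum_intCast_div {p : ℕ} [Fact p.Prime] {ι : Type*} {s : Finset ι} {a b : ι → ℤ}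
    {c : ℤ} (hb : ∀ i ∈ s, (b i : ZMod p) ≠ 0) (h : ∑ i ∈ s, (a i : ZMod p) / b i = c) :
    ratModEq p (∑ i ∈ s, (a i / b i : ℚ)) c := by
  have hden : ∀ i ∈ s, ((a i / b i : ℚ).den : ZMod p) ≠ 0 := fun i hi =>
    den_intCast_div_ne_zero (a i) (hb i hi)
  refine ratModEq_of_ratCast_eq (den_sum_ne_zero hden) (by simp) ?_
  rw [ratCast_sum_of_den_ne_zero hden, Rat.cast_intCast, ← h]
  exact sum_congr rfl fun i hi => ratCast_intCast_div (a i) (hb i hi)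

end Reduction

section FactorialNeZero

variable {R : Type*} [Semiring R] {n k : ℕ}

theorem natCast_ne_zero_of_dvd {m l : ℕ} (hl : (l : R) ≠ 0) (h : m ∣ l) : (m : R) ≠ 0 :=
  ne_zero_of_dvd_ne_zero hl (Nat.cast_dvd_cast h)

theorem natCast_ne_zero_of_factorial_ne_zero (hn : (n ! : R) ≠ 0) (hk : k ≠ 0) (hkn : k ≤ n) :
    (k : R) ≠ 0 :=
  natCast_ne_zero_of_dvd hn (Nat.dvd_factorial (Nat.pos_of_ne_zero hk) hkn)

theorem choose_ne_zero_of_factorial_ne_zero {m : ℕ} (hn : (n ! : R) ≠ 0) (hmn : m ≤ n)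
    (hkm : k ≤ m) : (m.choose k : R) ≠ 0 := by
  refine natCast_ne_zero_of_dvd hn (Dvd.dvd.trans ?_ (Nat.factorial_dvd_factorial hmn))
  rw [← Nat.choose_mul_factorial_mul_factorial hkm, mul_assoc]
  exact dvd_mul_right _ _

theorem centralBinom_ne_zero_of_factorial_ne_zero (hn : (n ! : R) ≠ 0) (hkn : 2 * k ≤ n) :
    (k.centralBinom : R) ≠ 0 :=
  choose_ne_zero_of_factorial_ne_zero hn hkn (by omega)

end FactorialNeZero

section HypergeometricIdentities

variable {K : Type*} [Field K] {n k : ℕ}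

/-- Zeilberger's deformation of the summand `1 / k ^ 2` of `ζ(2)`, which it equals at `n = 0`;
its WZ pair proves `ζ(2) = ∑ (21 k - 8) / (k ^ 3 * C(2k, k) ^ 3)`. -/
def zeilbergerTerm (K : Type*) [Field K] (n k : ℕ) : K :=
  1 / (n.centralBinom * k ^ 2 * (n + k).choose k ^ 2)

/-- The other member of the Wilf–Zeilberger pair of `zeilbergerTerm`: its differences in `k` are
the differences of `zeilbergerTerm` in `n`. -/
def zeilbergerCompanion (K : Type*) [Field K] (n k : ℕ) : K :=
  (2 * k + 3 * n + 1) / (2 * (2 * n + 1)) * zeilbergerTerm K n k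

theorem choose_succ_add (hn : (n + 1 : K) ≠ 0) :
    ((n + 1 + k).choose k : K) = (n + k + 1) * (n + k).choose k / (n + 1) := by
  have h := Nat.choose_mul_succ_eq (n + k) k
  rw [show n + k + 1 - k = n + 1 by omega, show n + k + 1 = n + 1 + k by ring] at h
  have h' := congrArg (Nat.cast (R := K)) h
  push_cast at h'
  rw [eq_div_iff hn]
  linear_combination -h'

theorem choose_add_succ (hk : (k + 1 : K) ≠ 0) :
    ((n + (k + 1)).choose (k + 1) : K) = (n + k + 1) * (n + k).choose k / (k + 1) := by
  have h := congrArg (Nat.cast (R := K)) (Nat.add_one_mul_choose_eq (n + k) k)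
  push_cast at h
  rw [eq_div_iff hk, ← add_assoc]
  linear_combination -h

theorem centralBinom_succ (hn : (n + 1 : K) ≠ 0) :
    ((n + 1).centralBinom : K) = 2 * (2 * n + 1) * n.centralBinom / (n + 1) := by
  have h := congrArg (Nat.cast (R := K)) (Nat.succ_mul_centralBinom_succ n)
  push_cast at h
  rw [eq_div_iff hn]
  linear_combination h

theorem zeilbergerTerm_succ_left_sub (h : ((2 * (n + 1))! : K) ≠ 0) (hk : k ≠ 0) (hkn : k ≤ n) :
    zeilbergerTerm K (n + 1) k - zeilbergerTerm K n k =
      zeilbergerCompanion K n (k + 1) - zeilbergerCompanion K n k := by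
  have hn1 : (n + 1 : K) ≠ 0 := mod_cast
    natCast_ne_zero_of_factorial_ne_zero h (k := n + 1) (by omega) (by omega)
  have hk0 : (k : K) ≠ 0 := natCast_ne_zero_of_factorial_ne_zero h hk (by omega)
  have hk1 : (k + 1 : K) ≠ 0 := mod_cast
    natCast_ne_zero_of_factorial_ne_zero h (k := k + 1) (by omega) (by omega)
  have hnk : (n + k + 1 : K) ≠ 0 := mod_cast
    natCast_ne_zero_of_factorial_ne_zero h (k := n + k + 1) (by omega) (by omega)
  have h2 : (2 : K) ≠ 0 := mod_cast
    natCast_ne_zero_of_factorial_ne_zero h (k := 2) (by omega) (by omega)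
  have h2n : (2 * n + 1 : K) ≠ 0 := mod_cast
    natCast_ne_zero_of_factorial_ne_zero h (k := 2 * n + 1) (by omega) (by omega)
  have hC : (n.centralBinom : K) ≠ 0 := centralBinom_ne_zero_of_factorial_ne_zero h (by omega)
  have hB : ((n + k).choose k : K) ≠ 0 :=
    choose_ne_zero_of_factorial_ne_zero h (by omega) (by omega)
  simp only [zeilbergerCompanion, zeilbergerTerm]
  rw [choose_succ_add hn1, choose_add_succ hk1, centralBinom_succ hn1]
  push_cast
  field_simp
  ring

theorem zeilbergerCompanion_one (h : ((2 * (n + 1))! : K) ≠ 0) :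
    zeilbergerCompanion K n 1 = 3 * (1 / (((n + 1 : ℕ) : K) ^ 2 * (n + 1).centralBinom)) := by
  have hn1 : (n + 1 : K) ≠ 0 := mod_cast
    natCast_ne_zero_of_factorial_ne_zero h (k := n + 1) (by omega) (by omega)
  have h2 : (2 : K) ≠ 0 := mod_cast
    natCast_ne_zero_of_factorial_ne_zero h (k := 2) (by omega) (by omega)
  have h2n : (2 * n + 1 : K) ≠ 0 := mod_cast
    natCast_ne_zero_of_factorial_ne_zero h (k := 2 * n + 1) (by omega) (by omega)
  have hC : (n.centralBinom : K) ≠ 0 := centralBinom_ne_zero_of_factorial_ne_zero h (by omega)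
  rw [zeilbergerCompanion, zeilbergerTerm, Nat.choose_one_right, centralBinom_succ hn1]
  push_cast
  field_simp
  ring

theorem zeilbergerTerm_add_zeilbergerCompanion (h : ((2 * (n + 1))! : K) ≠ 0) :
    zeilbergerTerm K (n + 1) (n + 1) + zeilbergerCompanion K n (n + 1) =
      (21 * ((n + 1 : ℕ) : K) - 8) / (((n + 1 : ℕ) : K) ^ 3 * (n + 1).centralBinom ^ 3) := by
  have hn1 : (n + 1 : K) ≠ 0 := mod_cast
    natCast_ne_zero_of_factorial_ne_zero h (k := n + 1) (by omega) (by omega)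
  have h2 : (2 : K) ≠ 0 := mod_cast
    natCast_ne_zero_of_factorial_ne_zero h (k := 2) (by omega) (by omega)
  have h2n : (2 * n + 1 : K) ≠ 0 := mod_cast
    natCast_ne_zero_of_factorial_ne_zero h (k := 2 * n + 1) (by omega) (by omega)
  have hC : (n.centralBinom : K) ≠ 0 := centralBinom_ne_zero_of_factorial_ne_zero h (by omega)
  have hdiag : ((n + 1 + (n + 1)).choose (n + 1) : K) = (n + 1).centralBinom := by
    rw [Nat.centralBinom, two_mul]
  have hoff : ((n + (n + 1)).choose (n + 1) : K) =
      (2 * n + 1) * n.centralBinom / (n + 1) := by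
    rw [choose_add_succ hn1, Nat.centralBinom, two_mul, two_mul]
  rw [zeilbergerCompanion, zeilbergerTerm, zeilbergerTerm, hdiag, hoff, centralBinom_succ hn1]
  push_cast
  field_simp
  ring

theorem sum_div_cube_mul_centralBinom_cube (h : ((2 * n)! : K) ≠ 0) :
    ∑ k ∈ Icc 1 n, (21 * (k : K) - 8) / ((k : K) ^ 3 * k.centralBinom ^ 3) =
      ∑ k ∈ Icc 1 n, zeilbergerTerm K n k +
        3 * ∑ k ∈ Icc 1 n, 1 / ((k : K) ^ 2 * k.centralBinom) := by
  induction n with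
  | zero => simp
  | succ n ih =>
    have hstep : ∑ k ∈ Icc 1 n, (zeilbergerTerm K (n + 1) k - zeilbergerTerm K n k) =
        zeilbergerCompanion K n (n + 1) - zeilbergerCompanion K n 1 := by
      rw [← sum_Ico_sub _ (Nat.le_add_left 1 n), Ico_add_one_right_eq_Icc]
      refine sum_congr rfl fun k hk => ?_
      rw [mem_Icc] at hk
      exact zeilbergerTerm_succ_left_sub h (by omega) hk.2
    have hn : ((2 * n)! : K) ≠ 0 :=
      natCast_ne_zero_of_dvd h (Nat.factorial_dvd_factorial (by omega))
    rw [sum_sub_distrib] at hstep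
    rw [sum_Icc_succ_top (by omega), sum_Icc_succ_top (by omega), sum_Icc_succ_top (by omega),
      ih hn, ← zeilbergerTerm_add_zeilbergerCompanion h, mul_add, ← zeilbergerCompanion_one h]
    linear_combination -hstep

/-- The summand of Apéry's remainder: summed over `1 ≤ k ≤ n` it gives, up to sign, the difference
between the partial sums of `-2 ∑ (-1) ^ k / k ^ 2` and `3 ∑ 1 / (k ^ 2 * C(2k, k))`, both of which
converge to `ζ(2)`. -/
def aperyTerm (K : Type*) [Field K] (n k : ℕ) : K :=
  (-1) ^ k / (k ^ 2 * n.choose k * (n + k).choose k)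

/-- The function of `k` through which `aperyTerm (n + 1) k + aperyTerm n k` telescopes. -/
def aperyCompanion (K : Type*) [Field K] (n k : ℕ) : K :=
  2 * (n + 1 + k) / (n + 1) * aperyTerm K (n + 1) k

theorem aperyTerm_succ_left_add (h : ((2 * (n + 1))! : K) ≠ 0) (hk : k ≠ 0) (hkn : k ≤ n) :
    aperyTerm K (n + 1) k + aperyTerm K n k =
      aperyCompanion K n k - aperyCompanion K n (k + 1) := by
  obtain ⟨d, rfl⟩ := Nat.exists_eq_add_of_le' hkn
  have hk0 : (k : K) ≠ 0 := natCast_ne_zero_of_factorial_ne_zero h hk (by omega)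
  have hk1 : (k + 1 : K) ≠ 0 := mod_cast
    natCast_ne_zero_of_factorial_ne_zero h (k := k + 1) (by omega) (by omega)
  have hd1 : (d + 1 : K) ≠ 0 := mod_cast
    natCast_ne_zero_of_factorial_ne_zero h (k := d + 1) (by omega) (by omega)
  have hn1 : ((d + k : ℕ) + 1 : K) ≠ 0 := mod_cast
    natCast_ne_zero_of_factorial_ne_zero h (k := d + k + 1) (by omega) (by omega)
  have hnk1 : ((d + k : ℕ) + k + 1 : K) ≠ 0 := mod_cast
    natCast_ne_zero_of_factorial_ne_zero h (k := d + k + k + 1) (by omega) (by omega)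
  have hnk2 : ((d + k + 1 : ℕ) + k + 1 : K) ≠ 0 := mod_cast
    natCast_ne_zero_of_factorial_ne_zero h (k := d + k + 1 + k + 1) (by omega) (by omega)
  have hA : ((d + k).choose k : K) ≠ 0 :=
    choose_ne_zero_of_factorial_ne_zero h (by omega) (by omega)
  have hB : ((d + k + k).choose k : K) ≠ 0 :=
    choose_ne_zero_of_factorial_ne_zero h (by omega) (by omega)
  have hA' : ((d + k + 1).choose k : K) = (d + k + 1) * (d + k).choose k / (d + 1) := by
    rw [add_right_comm, choose_succ_add hd1]
  have hA'' : ((d + k + 1).choose (k + 1) : K) = (d + k + 1) * (d + k).choose k / (k + 1) := by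
    rw [add_assoc, choose_add_succ hk1]
  simp only [aperyCompanion, aperyTerm]
  rw [choose_add_succ hk1, choose_succ_add hn1, hA', hA'']
  push_cast at hn1 hnk1 hnk2 ⊢
  field_simp
  ring

theorem aperyCompanion_one (h : ((2 * (n + 1))! : K) ≠ 0) :
    aperyCompanion K n 1 = -2 / ((n + 1 : ℕ) : K) ^ 2 := by
  have hn1 : (n + 1 : K) ≠ 0 := mod_cast
    natCast_ne_zero_of_factorial_ne_zero h (k := n + 1) (by omega) (by omega)
  have hn2 : (n + 1 + 1 : K) ≠ 0 := mod_cast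
    natCast_ne_zero_of_factorial_ne_zero h (k := n + 1 + 1) (by omega) (by omega)
  rw [aperyCompanion, aperyTerm, Nat.choose_one_right, Nat.choose_one_right]
  push_cast
  field_simp

theorem aperyTerm_self (n : ℕ) :
    aperyTerm K n n = (-1) ^ n * (1 / ((n : K) ^ 2 * n.centralBinom)) := by
  rw [aperyTerm, Nat.choose_self, Nat.cast_one, mul_one, Nat.centralBinom, two_mul, mul_one_div]

theorem aperyCompanion_succ_self (hn : (n + 1 : K) ≠ 0) :
    aperyCompanion K n (n + 1) = 4 * aperyTerm K (n + 1) (n + 1) := by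
  rw [aperyCompanion]
  push_cast
  field_simp
  ring

theorem two_mul_sum_alternating_add_three_mul_sum (h : ((2 * n)! : K) ≠ 0) :
    2 * ∑ k ∈ Icc 1 n, (-1) ^ k / (k : K) ^ 2 +
        3 * ∑ k ∈ Icc 1 n, 1 / ((k : K) ^ 2 * k.centralBinom) =
      -(-1) ^ n * ∑ k ∈ Icc 1 n, aperyTerm K n k := by
  induction n with
  | zero => simp
  | succ n ih =>
    have hn1 : (n + 1 : K) ≠ 0 := mod_cast
      natCast_ne_zero_of_factorial_ne_zero h (k := n + 1) (by omega) (by omega)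
    have hstep : ∑ k ∈ Icc 1 n, (aperyTerm K (n + 1) k + aperyTerm K n k) =
        aperyCompanion K n 1 - aperyCompanion K n (n + 1) := by
      rw [← neg_sub, ← sum_Ico_sub _ (Nat.le_add_left 1 n), Ico_add_one_right_eq_Icc,
        ← sum_neg_distrib]
      refine sum_congr rfl fun k hk => ?_
      rw [mem_Icc] at hk
      rw [neg_sub, aperyTerm_succ_left_add h (by omega) hk.2]
    have hn : ((2 * n)! : K) ≠ 0 :=
      natCast_ne_zero_of_dvd h (Nat.factorial_dvd_factorial (by omega))
    have hsign : ((-1 : K) ^ n) ^ 2 = 1 := by rw [pow_right_comm, neg_one_sq, one_pow]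
    rw [sum_add_distrib, aperyCompanion_one h, aperyCompanion_succ_self hn1, aperyTerm_self]
      at hstep
    rw [sum_Icc_succ_top (by omega), sum_Icc_succ_top (by omega), sum_Icc_succ_top (by omega),
      mul_add, mul_add, add_add_add_comm, ih hn, aperyTerm_self]
    rw [pow_succ] at hstep ⊢
    linear_combination -(-1) ^ n * hstep -
      3 * (1 / (((n + 1 : ℕ) : K) ^ 2 * (n + 1).centralBinom)) * hsign

end HypergeometricIdentities

section OddCharacteristic

variable {n k : ℕ}

theorem factorial_mul_choose_add_of_two_mul_add_one_eq_zero {R : Type*} [CommRing R]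
    (hn : (2 * n + 1 : R) = 0) (k : ℕ) :
    (k ! : R) * (n + k).choose k = (-1) ^ k * (k ! * n.choose k) := by
  have hneg : ((n + 1 : ℕ) : R) = -n := by
    push_cast
    linear_combination hn
  rw [← Nat.cast_mul, ← Nat.ascFactorial_eq_factorial_mul_choose,
    ← ascPochhammer_nat_eq_ascFactorial, ascPochhammer_eval_cast, hneg,
    ascPochhammer_eval_neg_eq_descPochhammer, descPochhammer_eval_eq_descFactorial,
    Nat.descFactorial_eq_factorial_mul_choose, Nat.cast_mul]

variable {K : Type*} [Field K]

theorem choose_add_of_two_mul_add_one_eq_zero (hn : (2 * n + 1 : K) = 0) (hk : (k ! : K) ≠ 0) :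
    ((n + k).choose k : K) = (-1) ^ k * n.choose k := by
  apply mul_left_cancel₀ hk
  rw [factorial_mul_choose_add_of_two_mul_add_one_eq_zero hn, mul_left_comm]

theorem zeilbergerTerm_eq_aperyTerm (hn : (2 * n + 1 : K) = 0) (h : (n ! : K) ≠ 0) (hkn : k ≤ n) :
    zeilbergerTerm K n k = (-1) ^ n * aperyTerm K n k := by
  have hk : (k ! : K) ≠ 0 := natCast_ne_zero_of_dvd h (Nat.factorial_dvd_factorial hkn)
  have hC : (n.centralBinom : K) = (-1) ^ n := by
    rw [Nat.centralBinom, two_mul, choose_add_of_two_mul_add_one_eq_zero hn h, Nat.choose_self,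
      Nat.cast_one, mul_one]
  rw [zeilbergerTerm, aperyTerm, hC, choose_add_of_two_mul_add_one_eq_zero hn hk]
  have hnk : (n.choose k : K) ≠ 0 := choose_ne_zero_of_factorial_ne_zero h le_rfl hkn
  field_simp
  rw [pow_right_comm, neg_one_sq, one_pow, pow_right_comm, neg_one_sq, one_pow, one_mul]

theorem sum_div_cube_mul_centralBinom_cube_of_two_mul_add_one_eq_zero (hn : (2 * n + 1 : K) = 0)
    (h : ((2 * n)! : K) ≠ 0) :
    ∑ k ∈ Icc 1 n, (21 * (k : K) - 8) / ((k : K) ^ 3 * k.centralBinom ^ 3) =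
      -2 * ∑ k ∈ Icc 1 n, (-1) ^ k / (k : K) ^ 2 := by
  have hfac : (n ! : K) ≠ 0 :=
    natCast_ne_zero_of_dvd h (Nat.factorial_dvd_factorial (by omega))
  have hterm : ∑ k ∈ Icc 1 n, zeilbergerTerm K n k =
      (-1) ^ n * ∑ k ∈ Icc 1 n, aperyTerm K n k := by
    rw [mul_sum]
    exact sum_congr rfl fun k hk => zeilbergerTerm_eq_aperyTerm hn hfac (mem_Icc.1 hk).2
  rw [sum_div_cube_mul_centralBinom_cube h, hterm]
  linear_combination two_mul_sum_alternating_add_three_mul_sum h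

end OddCharacteristic

section PrimeModulus

variable {p : ℕ} [Fact p.Prime]

theorem factorial_ne_zero_of_lt {n : ℕ} (h : n < p) : (n ! : ZMod p) ≠ 0 := by
  rw [Ne, ZMod.natCast_eq_zero_iff, Nat.Prime.dvd_factorial Fact.out, not_le]
  exact h

theorem pow_card_sub_three_eq {x : ZMod p} (hp : 3 ≤ p) (hx : x ≠ 0) :
    x ^ (p - 3) = 1 / x ^ 2 := by
  rw [eq_div_iff (pow_ne_zero 2 hx), ← pow_add, show p - 3 + 2 = p - 1 by omega,
    ZMod.pow_card_sub_one_eq_one hx]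

theorem sum_alternating_inv_sq_eq_num_eulerNumber {m : ℕ} (hp : p = 2 * m + 1) (hm : 1 < m) :
    ∑ k ∈ Icc 1 m, (-1) ^ k / (k : ZMod p) ^ 2 =
      2 * (-1) ^ m * ((eulerNumber (p - 3)).num : ZMod p) := by
  have hfac : ((2 * m)! : ZMod p) ≠ 0 := factorial_ne_zero_of_lt (by omega)
  have h2 : (2 : ZMod p) ≠ 0 := mod_cast
    natCast_ne_zero_of_factorial_ne_zero hfac (k := 2) (by omega) (by omega)
  have hsign : ((-1 : ZMod p) ^ m) ^ 2 = 1 := by rw [pow_right_comm, neg_one_sq, one_pow]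
  have hpow : ∑ k ∈ Icc 1 m, (-1) ^ k / (k : ZMod p) ^ 2 =
      4 * ∑ k ∈ Icc 1 m, (-1) ^ k * (2 * (k : ZMod p)) ^ (p - 3) := by
    rw [mul_sum]
    refine sum_congr rfl fun k hk => ?_
    rw [mem_Icc] at hk
    have hk0 : (k : ZMod p) ≠ 0 :=
      natCast_ne_zero_of_factorial_ne_zero hfac (by omega) (by omega)
    rw [pow_card_sub_three_eq (by omega) (mul_ne_zero h2 hk0)]
    field_simp
    norm_num
  have hE := num_eulerNumber_modEq (n := p - 3) (by omega) ⟨m - 1, by omega⟩ m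
  have hmod : 2 * (m : ℤ) + 1 = p := by rw [hp]; push_cast; rfl
  rw [hmod, ← ZMod.intCast_eq_intCast_iff] at hE
  rw [hpow, hE]
  push_cast
  linear_combination -4 * (∑ k ∈ Icc 1 m, (-1) ^ k * (2 * (k : ZMod p)) ^ (p - 3)) * hsign

theorem sum_div_cube_mul_centralBinom_cube_eq_num_eulerNumber {m : ℕ} (hp : p = 2 * m + 1)
    (hm : 1 < m) :
    ∑ k ∈ Icc 1 m, (21 * (k : ZMod p) - 8) / ((k : ZMod p) ^ 3 * k.centralBinom ^ 3) =
      (-1) ^ (m + 1) * 4 * ((eulerNumber (p - 3)).num : ZMod p) := by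
  have hchar : (2 * m + 1 : ZMod p) = 0 := mod_cast hp ▸ ZMod.natCast_self p
  rw [sum_div_cube_mul_centralBinom_cube_of_two_mul_add_one_eq_zero hchar
      (factorial_ne_zero_of_lt (by omega)),
    sum_alternating_inv_sq_eq_num_eulerNumber hp hm]
  ring

theorem cube_mul_centralBinom_cube_ne_zero {k : ℕ} (hk : k ≠ 0) (hkp : 2 * k < p) :
    (k : ZMod p) ^ 3 * k.centralBinom ^ 3 ≠ 0 := by
  have hfac : ((2 * k)! : ZMod p) ≠ 0 := factorial_ne_zero_of_lt hkp
  exact mul_ne_zero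
    (pow_ne_zero 3 (natCast_ne_zero_of_factorial_ne_zero hfac hk (by omega)))
    (pow_ne_zero 3 (centralBinom_ne_zero_of_factorial_ne_zero hfac le_rfl))

end PrimeModulus

theorem stmt8 (p : ℕ) (hp : p.Prime) (hp3 : 3 < p) :
    ratModEq p
      (∑ k ∈ Finset.Icc 1 ((p - 1) / 2),
        (21 * (k : ℚ) - 8) / ((k : ℚ) ^ 3 * ((2 * k).choose k : ℚ) ^ 3))
      ((-1) ^ ((p + 1) / 2) * 4 * eulerNumber (p - 3)) := by
  have : Fact p.Prime := ⟨hp⟩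
  obtain ⟨m, hm⟩ : Odd p := hp.odd_of_ne_two (by omega)
  have hden : ∀ k ∈ Icc 1 m, (((k : ℤ) ^ 3 * k.centralBinom ^ 3 : ℤ) : ZMod p) ≠ 0 := by
    intro k hk
    rw [mem_Icc] at hk
    exact mod_cast cube_mul_centralBinom_cube_ne_zero (p := p) (k := k) (by omega) (by omega)
  have hsum : ∑ k ∈ Icc 1 m, ((21 * k - 8 : ℤ) : ZMod p) / ((k : ℤ) ^ 3 * k.centralBinom ^ 3 : ℤ) =
      ((-1) ^ (m + 1) * 4 * (eulerNumber (p - 3)).num : ℤ) :=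
    mod_cast sum_div_cube_mul_centralBinom_cube_eq_num_eulerNumber hm (by omega)
  have key := ratModEq_sum_intCast_div hden hsum
  push_cast [coe_num_eulerNumber] at key
  rwa [show (p - 1) / 2 = m by omega, show (p + 1) / 2 = m + 1 by omega]
end

section
/- For any positive integer n, ∑_{k=1}^n C(n,k) · ((-1)^{k-1}/k) · H_k = H_n^{(2)}. -/
/-!
Write `T a n = ∑_{k=0}^n (-1)^k C(n,k) a_k` for the binomial transform. Pascal's rule gives
`T a (n+1) = T a n - T (a_{k+1}) n`, and the absorption identity `C(n,k)/(k+1) = C(n+1,k+1)/(n+1)`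
turns division by the index before transforming into division by the index afterwards. Hence, up to
a correction by `b_0`, transforming the partial sums of `b_k/k` amounts to dividing `T b` by the
index, while transforming `b_k/k` gives the partial sums of `T b m / m`. The first fact with `b = 1`
yields `T H n = -1/n`; the second with `b = H` then yields `-T (H_k/k) n = ∑_{m=1}^n 1/m²`.
-/

section BinomialTransform

open Finset

section Ring

variable {R : Type*} [Ring R]

/-- The binomial transform of a sequence, used to express alternating binomial sums. The sign
`(-1) ^ k` makes it an involution; it is `(-1) ^ n` times the `n`-th forward difference at `0`. -/
def binomialTransform (a : ℕ → R) (n : ℕ) : R :=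
  ∑ k ∈ range (n + 1), (-1) ^ k * (n.choose k : R) * a k

lemma binomialTransform_zero (a : ℕ → R) : binomialTransform a 0 = a 0 := by
  simp [binomialTransform]

lemma binomialTransform_sub (a b : ℕ → R) (n : ℕ) :
    binomialTransform (fun k ↦ a k - b k) n = binomialTransform a n - binomialTransform b n := by
  simp only [binomialTransform, mul_sub, sum_sub_distrib]

lemma binomialTransform_eq_sub_sum_range (a : ℕ → R) (n : ℕ) :
    binomialTransform a n =
      a 0 - ∑ k ∈ range n, (-1) ^ k * (n.choose (k + 1) : R) * a (k + 1) := by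
  rw [binomialTransform, sum_range_succ', sub_eq_neg_add, ← sum_neg_distrib]
  simp [pow_succ]

lemma binomialTransform_eq_sub_sum_Icc (a : ℕ → R) (n : ℕ) :
    binomialTransform a n =
      a 0 - ∑ k ∈ Icc 1 n, (-1) ^ (k - 1) * (n.choose k : R) * a k := by
  rw [binomialTransform_eq_sub_sum_range, range_eq_Ico, ← Ico_add_one_right_eq_Icc,
    ← sum_Ico_add' _ 0 n 1]
  simp only [Nat.add_sub_cancel]

lemma binomialTransform_succ (a : ℕ → R) (n : ℕ) :
    binomialTransform a (n + 1) =
      binomialTransform a n - binomialTransform (fun k ↦ a (k + 1)) n := by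
  have extend_range : ∑ k ∈ range n, (-1) ^ k * (n.choose (k + 1) : R) * a (k + 1) =
      ∑ k ∈ range (n + 1), (-1) ^ k * (n.choose (k + 1) : R) * a (k + 1) := by
    rw [sum_range_succ, Nat.choose_succ_self, Nat.cast_zero, mul_zero, zero_mul, add_zero]
  have pascal : ∑ k ∈ range (n + 1), (-1) ^ k * ((n + 1).choose (k + 1) : R) * a (k + 1) =
      binomialTransform (fun k ↦ a (k + 1)) n +
        ∑ k ∈ range (n + 1), (-1) ^ k * (n.choose (k + 1) : R) * a (k + 1) := by
    simp only [binomialTransform, Nat.choose_succ_succ', Nat.cast_add, mul_add, add_mul,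
      sum_add_distrib]
  rw [binomialTransform_eq_sub_sum_range a (n + 1), binomialTransform_eq_sub_sum_range a n,
    extend_range, pascal]
  abel

lemma binomialTransform_succ_eq_neg_diff (a : ℕ → R) (n : ℕ) :
    binomialTransform a (n + 1) = -binomialTransform (fun k ↦ a (k + 1) - a k) n := by
  rw [binomialTransform_succ, binomialTransform_sub, neg_sub]

lemma binomialTransform_const_succ (c : R) (n : ℕ) :
    binomialTransform (fun _ ↦ c) (n + 1) = 0 := by
  rw [binomialTransform_succ, sub_self]

end Ring

section Field

variable {K : Type*} [Field K] [CharZero K]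

lemma choose_div_add_one (n k : ℕ) :
    (n.choose k : K) / (k + 1) = ((n + 1).choose (k + 1) : K) / (n + 1) := by
  rw [div_eq_div_iff (Nat.cast_add_one_ne_zero k) (Nat.cast_add_one_ne_zero n), mul_comm]
  exact_mod_cast Nat.add_one_mul_choose_eq n k

lemma binomialTransform_shift_div (b : ℕ → K) (n : ℕ) :
    binomialTransform (fun k ↦ b (k + 1) / (k + 1)) n =
      (b 0 - binomialTransform b (n + 1)) / (n + 1) := by
  rw [binomialTransform_eq_sub_sum_range b, sub_sub_cancel, binomialTransform, sum_div]
  refine sum_congr rfl fun k _ ↦ ?_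
  calc (-1) ^ k * (n.choose k : K) * (b (k + 1) / (k + 1))
      = (-1) ^ k * ((n.choose k : K) / (k + 1)) * b (k + 1) := by ring
    _ = (-1) ^ k * ((n + 1).choose (k + 1) : K) * b (k + 1) / (n + 1) := by
      rw [choose_div_add_one]; ring

lemma binomialTransform_sum_div_succ (b : ℕ → K) (n : ℕ) :
    binomialTransform (fun k ↦ ∑ j ∈ Icc 1 k, b j / j) (n + 1) =
      (binomialTransform b (n + 1) - b 0) / (n + 1) := by
  simp only [binomialTransform_succ_eq_neg_diff (fun k ↦ ∑ j ∈ Icc 1 k, b j / j),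
    sum_Icc_succ_top (Nat.le_add_left 1 _), add_sub_cancel_left, Nat.cast_add_one,
    binomialTransform_shift_div, ← neg_div, neg_sub]

-- On the left, the term `k = 0` is `b 0 / 0 = 0`.
lemma binomialTransform_div (b : ℕ → K) (n : ℕ) :
    binomialTransform (fun k ↦ b k / k) n =
      ∑ m ∈ Icc 1 n, (binomialTransform b m - b 0) / m := by
  induction n with
  | zero => simp [binomialTransform_zero]
  | succ n ih =>
    simp only [binomialTransform_succ (fun k ↦ b k / k), ih, Nat.cast_add_one,
      binomialTransform_shift_div, sum_Icc_succ_top (Nat.le_add_left 1 n)]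
    ring

end Field

lemma H_zero : H 0 = 0 := rfl

lemma binomialTransform_H {n : ℕ} (hn : n ≠ 0) : binomialTransform H n = -(1 / n) := by
  obtain ⟨m, rfl⟩ := Nat.exists_eq_succ_of_ne_zero hn
  calc binomialTransform H (m + 1)
      = (binomialTransform (fun _ ↦ (1 : ℚ)) (m + 1) - 1) / (m + 1) :=
        binomialTransform_sum_div_succ (fun _ ↦ 1) m
    _ = -(1 / (m + 1 : ℕ)) := by
      rw [binomialTransform_const_succ, zero_sub, neg_div, Nat.cast_add_one]

lemma binomialTransform_H_div (n : ℕ) : binomialTransform (fun k ↦ H k / k) n = -H2 n := by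
  rw [binomialTransform_div, H2, ← sum_neg_distrib]
  refine sum_congr rfl fun m hm ↦ ?_
  have hm0 : m ≠ 0 := Nat.one_le_iff_ne_zero.mp (mem_Icc.mp hm).1
  rw [binomialTransform_H hm0, H_zero]
  ring

end BinomialTransform

theorem stmt10 (n : ℕ) (hn : 0 < n) :
    ∑ k ∈ Finset.Icc 1 n, (n.choose k : ℚ) * ((-1) ^ (k - 1) / k) * H k = H2 n := by
  calc ∑ k ∈ Finset.Icc 1 n, (n.choose k : ℚ) * ((-1) ^ (k - 1) / k) * H k
      = ∑ k ∈ Finset.Icc 1 n, (-1) ^ (k - 1) * (n.choose k : ℚ) * (H k / k) :=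
        Finset.sum_congr rfl fun k _ ↦ by ring
    _ = -binomialTransform (fun k ↦ H k / k) n := by
        rw [binomialTransform_eq_sub_sum_Icc, H_zero, zero_div, zero_sub, neg_neg]
    _ = H2 n := by rw [binomialTransform_H_div, neg_neg]
end

section
/- Let p > 3 be a prime. Then ∑_{1 ≤ k ≤ (p-1)/2, k odd} H_k/k ≡ (3/4)·q_p(2)² − (-1)^{(p-1)/2}·E_{p-3}/2 (mod p), where q_p(2) = (2^{p-1} − 1)/p. -/
/-!
Put `n = (p - 1) / 2`, `q = q_p(2)`, `A = ∑ 1/k²` and `U = ∑ H_k/k`, the last two sums running over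
the odd `k ≤ n`; everything is read in `ZMod p`.

The binomial expansion of `(1 + 1) ^ p` gives `H_n = -2q`, and as `∑_{k ≤ n} 1/k² = 0`, squaring
`H_n` yields `∑_{k ≤ n} H_k/k = 2q²`. Next let `T` be the sum of `H_k/k` over all even `k < p`.
The even `i` in `H_k = ∑_{i ≤ k} 1/i` contribute `(2q²)/4` to `T` by halving `i` and `k`. The odd
`i` contribute `0`: setting `(a, b, c) = (i, k - i, p - k)` turns their contribution into minus the
sum of `1/(ac)` over the triples of odd numbers with `a + b + c = p`, and cyclic symmetry makes that
sum a third of the sum of `(a + b + c)/(abc) = 0`. Hence `T = q²/2`. On the other hand, reflecting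
the even `k > n` by `k ↦ p - k`, under which `H_{p-k} = H_k - 1/k`, shows `T = (2q² - U) + (A - U)`.
Therefore `4U = 3q² + 2A`.

Finally, modulo `p` the Euler numbers are the alternating power sums
`E_m = ∑_{k < p} (-1)^k (2k + 1)^m`, because these satisfy the same recursion. For `m = p - 3`,
centring the sum at `k = n`, where `2k + 1` vanishes, gives `A = -(-1)^n E_{p-3}`.
-/

open Finset

section FiniteSums

variable {M R : Type*}

lemma sum_Icc_filter_even [AddCommMonoid M] (n : ℕ) (f : ℕ → M) :
    ∑ k ∈ Icc 1 n with Even k, f k = ∑ k ∈ Icc 1 (n / 2), f (2 * k) := by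
  refine sum_nbij' (· / 2) (2 * ·) ?_ ?_ ?_ ?_ fun k hk ↦ ?_
  case refine_5 =>
    rw [Nat.mul_div_cancel' (mem_filter.mp hk).2.two_dvd]
  all_goals simp only [mem_filter, mem_Icc, Nat.even_iff]; lia

lemma sum_filter_even_add_sum_filter_odd [AddCommMonoid M] (s : Finset ℕ) (f : ℕ → M) :
    ∑ k ∈ s with Even k, f k + ∑ k ∈ s with Odd k, f k = ∑ k ∈ s, f k := by
  simpa only [Nat.not_even_iff_odd] using sum_filter_add_sum_filter_not s (fun k ↦ Even k) f

lemma sum_neg_one_pow_mul [Ring R] (s : Finset ℕ) (f : ℕ → R) :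
    ∑ k ∈ s, (-1) ^ k * f k = ∑ k ∈ s with Even k, f k - ∑ k ∈ s with Odd k, f k := by
  rw [← sum_filter_even_add_sum_filter_odd, sub_eq_add_neg, ← sum_neg_distrib]
  congr 1 <;> refine sum_congr rfl fun k hk ↦ ?_
  · rw [(mem_filter.mp hk).2.neg_one_pow, one_mul]
  · rw [(mem_filter.mp hk).2.neg_one_pow, neg_one_mul]

lemma sum_Icc_filter_even_of_odd [AddCommMonoid M] {m : ℕ} (hm : Odd m) (f : ℕ → M) :
    ∑ k ∈ Icc 1 (m - 1) with Even k, f k =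
      ∑ k ∈ Icc 1 ((m - 1) / 2) with Even k, f k +
        ∑ k ∈ Icc 1 ((m - 1) / 2) with Odd k, f (m - k) := by
  rw [← sum_filter_add_sum_filter_not _ (· ≤ (m - 1) / 2), filter_filter, filter_filter]
  rw [Nat.odd_iff] at hm
  congr 1
  · refine sum_congr ?_ fun _ _ ↦ rfl
    ext k
    simp only [mem_filter, mem_Icc]
    lia
  · refine sum_nbij' (m - ·) (m - ·) ?_ ?_ ?_ ?_ fun k hk ↦ ?_
    case refine_5 =>
      rw [mem_filter, mem_Icc] at hk
      rw [Nat.sub_sub_self (by lia)]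
    all_goals simp only [mem_filter, mem_Icc, Nat.even_iff, Nat.odd_iff]; lia

lemma sum_range_two_mul_add_one [AddCommMonoid M] (n : ℕ) (f : ℕ → M) :
    ∑ k ∈ range (2 * n + 1), f k = f n + ∑ i ∈ Icc 1 n, (f (n + i) + f (n - i)) := by
  induction n generalizing f with
  | zero => simp
  | succ n ih =>
    have hshift : ∀ i ∈ Icc 1 n, f (n + 1 + i) + f (n + 1 - i) =
        f (n + i + 1) + f (n - i + 1) := fun i hi ↦ by
      rw [Nat.add_right_comm, Nat.sub_add_comm (mem_Icc.mp hi).2]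
    rw [mul_add_one, add_right_comm, sum_range_succ, sum_range_succ', ih fun k ↦ f (k + 1),
      sum_Icc_succ_top (Nat.le_add_left 1 n), sum_congr rfl hshift, Nat.sub_self,
      show n + 1 + (n + 1) = 2 * n + 1 + 1 by ring]
    abel

lemma two_mul_sum_Icc_sum_Icc_mul [CommSemiring R] (n : ℕ) (f : ℕ → R) :
    2 * ∑ k ∈ Icc 1 n, (∑ i ∈ Icc 1 k, f i) * f k =
      (∑ k ∈ Icc 1 n, f k) ^ 2 + ∑ k ∈ Icc 1 n, f k ^ 2 := by
  induction n with
  | zero => simp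
  | succ n ih =>
    simp only [sum_Icc_succ_top (Nat.le_add_left 1 n), mul_add, ih]
    ring

/-- The ordered triples of odd natural numbers with sum `n`. -/
def oddTriples (n : ℕ) : Finset (ℕ × ℕ × ℕ) :=
  {x ∈ range n ×ˢ range n ×ˢ range n |
    (Odd x.1 ∧ Odd x.2.1 ∧ Odd x.2.2) ∧ x.1 + x.2.1 + x.2.2 = n}

lemma mem_oddTriples {n : ℕ} {x : ℕ × ℕ × ℕ} :
    x ∈ oddTriples n ↔ (Odd x.1 ∧ Odd x.2.1 ∧ Odd x.2.2) ∧ x.1 + x.2.1 + x.2.2 = n := by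
  simp only [oddTriples, mem_filter, mem_product, mem_range, Nat.odd_iff]
  lia

lemma sum_oddTriples_rotate [AddCommMonoid M] (n : ℕ) (f : ℕ → ℕ → ℕ → M) :
    ∑ x ∈ oddTriples n, f x.2.1 x.2.2 x.1 = ∑ x ∈ oddTriples n, f x.1 x.2.1 x.2.2 := by
  refine sum_nbij' (fun x ↦ (x.2.1, x.2.2, x.1)) (fun x ↦ (x.2.2, x.1, x.2.1)) ?_ ?_
    (fun _ _ ↦ rfl) (fun _ _ ↦ rfl) (fun _ _ ↦ rfl) <;>
  · simp only [mem_oddTriples]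
    lia

end FiniteSums

section Reduction

variable {p : ℕ} [Fact p.Prime]

/-- The rational number `a` is `p`-integral and its residue modulo `p` is `x`. The first condition
is needed because `Rat.cast` sends rationals whose denominator vanishes in `ZMod p` to the junk
value `0`. -/
def ReducesTo (p : ℕ) [Fact p.Prime] (a : ℚ) (x : ZMod p) : Prop :=
  (a.den : ZMod p) ≠ 0 ∧ (a : ZMod p) = x

namespace ReducesTo

variable {a b : ℚ} {x y : ZMod p}

lemma intCast (p : ℕ) [Fact p.Prime] (z : ℤ) : ReducesTo p z z :=
  ⟨by simp, Rat.cast_intCast z⟩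

lemma natCast (p : ℕ) [Fact p.Prime] (n : ℕ) : ReducesTo p n n :=
  ⟨by simp, Rat.cast_natCast n⟩

lemma add (ha : ReducesTo p a x) (hb : ReducesTo p b y) : ReducesTo p (a + b) (x + y) := by
  refine ⟨fun h ↦ ?_, by rw [Rat.cast_add_of_ne_zero ha.1 hb.1, ha.2, hb.2]⟩
  have := zero_dvd_iff.mp (h ▸ Nat.cast_dvd_cast (α := ZMod p) (Rat.add_den_dvd a b))
  rw [Nat.cast_mul] at this
  exact mul_ne_zero ha.1 hb.1 this

lemma neg (ha : ReducesTo p a x) : ReducesTo p (-a) (-x) :=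
  ⟨by simpa only [Rat.neg_den] using ha.1, by rw [Rat.cast_neg, ha.2]⟩

lemma sub (ha : ReducesTo p a x) (hb : ReducesTo p b y) : ReducesTo p (a - b) (x - y) := by
  simpa only [sub_eq_add_neg] using ha.add hb.neg

lemma mul (ha : ReducesTo p a x) (hb : ReducesTo p b y) : ReducesTo p (a * b) (x * y) := by
  refine ⟨fun h ↦ ?_, by rw [Rat.cast_mul_of_ne_zero ha.1 hb.1, ha.2, hb.2]⟩
  have := zero_dvd_iff.mp (h ▸ Nat.cast_dvd_cast (α := ZMod p) (Rat.mul_den_dvd a b))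
  rw [Nat.cast_mul] at this
  exact mul_ne_zero ha.1 hb.1 this

lemma div_natCast (ha : ReducesTo p a x) {n : ℕ} (hn : (n : ZMod p) ≠ 0) :
    ReducesTo p (a / n) (x / n) := by
  have hinv : ReducesTo p (n : ℚ)⁻¹ (n : ZMod p)⁻¹ := by
    have hn0 : n ≠ 0 := fun h ↦ hn (by rw [h, Nat.cast_zero])
    refine ⟨by rwa [Rat.inv_natCast_den, if_neg hn0], ?_⟩
    rw [Rat.cast_inv_of_ne_zero (by simpa using hn), Rat.cast_natCast]
  simpa only [div_eq_mul_inv] using ha.mul hinv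

lemma sum {ι : Type*} {s : Finset ι} {f : ι → ℚ} {g : ι → ZMod p}
    (h : ∀ i ∈ s, ReducesTo p (f i) (g i)) : ReducesTo p (∑ i ∈ s, f i) (∑ i ∈ s, g i) := by
  classical
  induction s using Finset.induction_on with
  | empty => simpa using intCast p 0
  | insert i s hi ih =>
    rw [sum_insert hi, sum_insert hi]
    exact (h i (mem_insert_self i s)).add (ih fun j hj ↦ h j (mem_insert_of_mem hj))

lemma ratModEq (ha : ReducesTo p a x) (hb : ReducesTo p b x) : ratModEq p a b := by
  have h := ha.sub hb
  rw [sub_self] at h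
  have hnum : ((a - b).num : ZMod p) = 0 := by
    simpa only [Rat.cast_def, div_eq_zero_iff, h.1, or_false] using h.2
  exact (ZMod.intCast_zmod_eq_zero_iff_dvd _ p).mp hnum

end ReducesTo

end Reduction

section HarmonicSums

lemma natCast_self_sub {p k : ℕ} (hk : k ≤ p) : ((p - k : ℕ) : ZMod p) = -k := by
  rw [Nat.cast_sub hk, CharP.cast_eq_zero, zero_sub]

variable {p : ℕ} [Fact p.Prime]

lemma natCast_ne_zero_of_lt {k : ℕ} (hk : 0 < k) (hkp : k < p) : (k : ZMod p) ≠ 0 := by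
  rw [Ne, ZMod.natCast_eq_zero_iff]
  exact Nat.not_dvd_of_pos_of_lt hk hkp

lemma odd_of_ne_two (hp : p ≠ 2) : Odd p := (Fact.out : p.Prime).odd_of_ne_two hp

lemma two_ne_zero_of_ne_two (hp : p ≠ 2) : (2 : ZMod p) ≠ 0 := by
  exact_mod_cast natCast_ne_zero_of_lt two_pos ((Fact.out : p.Prime).two_le.lt_of_ne' hp)

lemma three_ne_zero_of_three_lt (hp : 3 < p) : (3 : ZMod p) ≠ 0 :=
  mod_cast natCast_ne_zero_of_lt three_pos hp

/-- The `n`-th harmonic number modulo `p`, meaningful for `n < p`. -/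
def harmonicMod (p n : ℕ) : ZMod p := ∑ i ∈ Icc 1 n, (i : ZMod p)⁻¹

lemma harmonicMod_succ (p n : ℕ) :
    harmonicMod p (n + 1) = harmonicMod p n + ((n + 1 : ℕ) : ZMod p)⁻¹ :=
  sum_Icc_succ_top (Nat.le_add_left 1 n) _

lemma reducesTo_H {n : ℕ} (hn : n < p) : ReducesTo p (H n) (harmonicMod p n) := by
  refine ReducesTo.sum fun k hk ↦ ?_
  rw [mem_Icc] at hk
  simpa using (ReducesTo.natCast p 1).div_natCast (natCast_ne_zero_of_lt hk.1 (hk.2.trans_lt hn))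

lemma harmonicMod_pred_self (hp : p ≠ 2) : harmonicMod p (p - 1) = 0 := by
  have hodd := Nat.odd_iff.mp (odd_of_ne_two hp)
  refine sum_involution (fun k _ ↦ p - k) (fun k hk ↦ ?_) ?_ ?_ ?_
  · rw [natCast_self_sub (by rw [mem_Icc] at hk; lia), inv_neg, add_neg_cancel]
  all_goals simp only [mem_Icc]; lia

lemma harmonicMod_self_sub (hp : p ≠ 2) {k : ℕ} (hk : 1 ≤ k) (hkp : k < p) :
    harmonicMod p (p - k) = harmonicMod p k - (k : ZMod p)⁻¹ := by
  induction k, hk using Nat.le_induction with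
  | base =>
    rw [harmonicMod_pred_self hp]
    simp [harmonicMod]
  | succ k _ ih =>
    have hstep := harmonicMod_succ p (p - (k + 1))
    rw [show p - (k + 1) + 1 = p - k by lia, natCast_self_sub (by lia), inv_neg,
      ih (by lia)] at hstep
    rw [harmonicMod_succ]
    linear_combination -hstep

/-- The Fermat quotient `q_p(a)`; the division is exact when `p` does not divide `a`. -/
def fermatQuotient (p : ℕ) (a : ℤ) : ℤ := (a ^ (p - 1) - 1) / p

lemma mul_fermatQuotient {a : ℤ} (ha : (a : ZMod p) ≠ 0) :
    p * fermatQuotient p a = a ^ (p - 1) - 1 := by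
  refine Int.mul_ediv_cancel' ?_
  rw [← ZMod.intCast_zmod_eq_zero_iff_dvd]
  push_cast
  rw [ZMod.pow_card_sub_one_eq_one ha, sub_self]

lemma mul_fermatQuotient_two (hp : p ≠ 2) : p * fermatQuotient p 2 = 2 ^ (p - 1) - 1 :=
  mul_fermatQuotient (mod_cast two_ne_zero_of_ne_two hp)

lemma cast_fermatQuotient_two (hp : p ≠ 2) :
    (fermatQuotient p 2 : ℚ) = (2 ^ (p - 1) - 1) / p := by
  rw [eq_div_iff (Nat.cast_ne_zero.mpr (Fact.out : p.Prime).ne_zero), mul_comm]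
  exact_mod_cast mul_fermatQuotient_two hp

lemma sum_choose_div_self (hp : p ≠ 2) :
    ∑ k ∈ Icc 1 (p - 1), ((p.choose k / p : ℕ) : ℤ) = 2 * fermatQuotient p 2 := by
  have hprime : p.Prime := Fact.out
  have hbinom := add_pow_prime_eq' hprime (1 : ℤ) 1
  simp only [one_pow, one_mul, one_add_one_eq_two] at hbinom
  rw [show Icc 1 (p - 1) = Ioo 0 p by ext; simp only [mem_Icc, mem_Ioo]; lia]
  refine mul_left_cancel₀ (Int.natCast_ne_zero.mpr hprime.ne_zero) ?_
  have hpow : (2 : ℤ) ^ p = 2 ^ (p - 1) * 2 := by rw [← pow_succ, Nat.sub_add_cancel hprime.one_le]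
  linear_combination -hbinom + hpow - 2 * mul_fermatQuotient_two hp

lemma natCast_choose_pred {k : ℕ} (hk : k < p) : ((p - 1).choose k : ZMod p) = (-1) ^ k := by
  have hprime : p.Prime := Fact.out
  induction k with
  | zero => simp
  | succ k ih =>
    have hpascal := Nat.choose_succ_succ (p - 1) k
    rw [Nat.succ_eq_add_one, Nat.sub_add_cancel hprime.one_le] at hpascal
    have hzero : (p.choose (k + 1) : ZMod p) = 0 :=
      (ZMod.natCast_eq_zero_iff _ _).mpr (hprime.dvd_choose_self k.succ_ne_zero hk)
    rw [hpascal, Nat.cast_add, ih (by lia)] at hzero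
    rw [pow_succ]
    linear_combination hzero

lemma natCast_choose_div_self {k : ℕ} (hk : 1 ≤ k) (hkp : k < p) :
    ((p.choose k / p : ℕ) : ZMod p) = -((-1) ^ k * (k : ZMod p)⁻¹) := by
  have hprime : p.Prime := Fact.out
  obtain ⟨j, rfl⟩ := Nat.exists_eq_add_of_le' hk
  have habsorb : (p - 1).choose j = p.choose (j + 1) / p * (j + 1) := by
    refine Nat.eq_of_mul_eq_mul_left hprime.pos ?_
    rw [← mul_assoc, Nat.mul_div_cancel' (hprime.dvd_choose_self j.succ_ne_zero hkp)]
    simpa only [Nat.sub_add_cancel hprime.one_le] using Nat.add_one_mul_choose_eq (p - 1) j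
  have hchoose := natCast_choose_pred (p := p) (k := j) (by lia)
  rw [habsorb, Nat.cast_mul] at hchoose
  rw [pow_succ, mul_neg_one, neg_mul, neg_neg, ← hchoose,
    mul_inv_cancel_right₀ (natCast_ne_zero_of_lt hk hkp)]

lemma two_mul_sum_even_inv (hp : p ≠ 2) (n : ℕ) :
    2 * ∑ k ∈ Icc 1 n with Even k, (k : ZMod p)⁻¹ = harmonicMod p (n / 2) := by
  rw [sum_Icc_filter_even, mul_sum]
  refine sum_congr rfl fun k _ ↦ ?_
  rw [Nat.cast_mul, Nat.cast_two, mul_inv, mul_inv_cancel_left₀ (two_ne_zero_of_ne_two hp)]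

lemma harmonicMod_half (hp : p ≠ 2) :
    harmonicMod p ((p - 1) / 2) = -2 * fermatQuotient p 2 := by
  have hsplit := sum_filter_even_add_sum_filter_odd (Icc 1 (p - 1)) fun k ↦ (k : ZMod p)⁻¹
  rw [← harmonicMod, harmonicMod_pred_self hp] at hsplit
  have halternating : ∑ k ∈ Icc 1 (p - 1), (-1) ^ k * (k : ZMod p)⁻¹ = -2 * fermatQuotient p 2 := by
    have hchoose := congrArg (Int.cast : ℤ → ZMod p) (sum_choose_div_self hp)
    simp only [Int.cast_sum, Int.cast_natCast, Int.cast_mul, Int.cast_ofNat] at hchoose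
    rw [sum_congr rfl fun k hk ↦ natCast_choose_div_self (p := p) (k := k) (mem_Icc.mp hk).1
      (by rw [mem_Icc] at hk; lia), sum_neg_distrib] at hchoose
    linear_combination -hchoose
  rw [sum_neg_one_pow_mul] at halternating
  linear_combination halternating + hsplit - two_mul_sum_even_inv hp (p - 1)

lemma sum_half_inv_sq (hp : 3 < p) : ∑ k ∈ Icc 1 ((p - 1) / 2), (k : ZMod p)⁻¹ ^ 2 = 0 := by
  have hp2 : p ≠ 2 := by lia
  have h2 := two_ne_zero_of_ne_two hp2
  have hdouble : 2 ^ 2 * ∑ k ∈ Icc 1 (p - 1) with Even k, (k : ZMod p)⁻¹ ^ 2 =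
      ∑ k ∈ Icc 1 ((p - 1) / 2), (k : ZMod p)⁻¹ ^ 2 := by
    rw [sum_Icc_filter_even, mul_sum]
    refine sum_congr rfl fun k _ ↦ ?_
    rw [Nat.cast_mul, Nat.cast_two, mul_inv, ← mul_pow, mul_inv_cancel_left₀ h2]
  have hreflect : ∑ k ∈ Icc 1 (p - 1) with Even k, (k : ZMod p)⁻¹ ^ 2 =
      ∑ k ∈ Icc 1 ((p - 1) / 2), (k : ZMod p)⁻¹ ^ 2 := by
    rw [sum_Icc_filter_even_of_odd (odd_of_ne_two hp2),
      ← sum_filter_even_add_sum_filter_odd (Icc 1 ((p - 1) / 2))]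
    congr 1
    refine sum_congr rfl fun k hk ↦ ?_
    rw [natCast_self_sub (by rw [mem_filter, mem_Icc] at hk; lia), inv_neg, neg_sq]
  refine (mul_eq_zero.mp ?_).resolve_left (three_ne_zero_of_three_lt hp)
  linear_combination hdouble - 2 ^ 2 * hreflect

lemma sum_half_harmonicMod_mul_inv (hp : 3 < p) :
    ∑ k ∈ Icc 1 ((p - 1) / 2), harmonicMod p k * (k : ZMod p)⁻¹ = 2 * fermatQuotient p 2 ^ 2 := by
  have hp2 : p ≠ 2 := by lia
  have h : 2 * ∑ k ∈ Icc 1 ((p - 1) / 2), harmonicMod p k * (k : ZMod p)⁻¹ =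
      harmonicMod p ((p - 1) / 2) ^ 2 + ∑ k ∈ Icc 1 ((p - 1) / 2), (k : ZMod p)⁻¹ ^ 2 :=
    two_mul_sum_Icc_sum_Icc_mul _ _
  rw [harmonicMod_half hp2, sum_half_inv_sq hp] at h
  refine mul_left_cancel₀ (two_ne_zero_of_ne_two hp2) ?_
  linear_combination h

lemma sum_oddTriples_inv_mul_inv (hp : 3 < p) :
    ∑ x ∈ oddTriples p, (x.1 : ZMod p)⁻¹ * (x.2.2 : ZMod p)⁻¹ = 0 := by
  have hrotate := sum_oddTriples_rotate p fun a _ c ↦ (a : ZMod p)⁻¹ * (c : ZMod p)⁻¹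
  have hrotate' := sum_oddTriples_rotate p fun a b _ ↦ (b : ZMod p)⁻¹ * (a : ZMod p)⁻¹
  have hzero : ∀ x ∈ oddTriples p, (x.1 : ZMod p)⁻¹ * (x.2.2 : ZMod p)⁻¹ +
      (x.2.1 : ZMod p)⁻¹ * (x.1 : ZMod p)⁻¹ + (x.2.2 : ZMod p)⁻¹ * (x.2.1 : ZMod p)⁻¹ = 0 := by
    rintro ⟨a, b, c⟩ hx
    obtain ⟨⟨ha, hb, hc⟩, habc⟩ := mem_oddTriples.mp hx
    have ha0 : (a : ZMod p) ≠ 0 := natCast_ne_zero_of_lt ha.pos (by grind)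
    have hb0 : (b : ZMod p) ≠ 0 := natCast_ne_zero_of_lt hb.pos (by grind)
    have hc0 : (c : ZMod p) ≠ 0 := natCast_ne_zero_of_lt hc.pos (by grind)
    have hsum : (a + b + c : ZMod p) = 0 := by
      rw [← Nat.cast_add, ← Nat.cast_add, habc, CharP.cast_eq_zero]
    field_simp
    linear_combination hsum
  have hsum := sum_eq_zero hzero
  rw [sum_add_distrib, sum_add_distrib] at hsum
  refine (mul_eq_zero.mp ?_).resolve_left (three_ne_zero_of_three_lt hp)
  linear_combination hsum - 2 * hrotate - hrotate'

lemma sum_even_sum_odd_inv_mul_inv (hp : 3 < p) :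
    ∑ k ∈ Icc 1 (p - 1) with Even k, (∑ i ∈ Icc 1 k with Odd i, (i : ZMod p)⁻¹) * (k : ZMod p)⁻¹ =
      0 := by
  have hodd := Nat.odd_iff.mp (odd_of_ne_two (p := p) (by lia))
  simp only [sum_mul]
  rw [sum_sigma', ← neg_eq_zero, ← sum_neg_distrib, ← sum_oddTriples_inv_mul_inv hp]
  refine sum_nbij' (fun x ↦ (x.2, x.1 - x.2, p - x.1)) (fun x ↦ ⟨x.1 + x.2.1, x.1⟩) ?_ ?_ ?_ ?_ ?_
  case refine_5 =>
    rintro ⟨k, i⟩ hx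
    simp only [mem_sigma, mem_filter, mem_Icc] at hx
    rw [natCast_self_sub (by lia), inv_neg, mul_neg]
  all_goals
    simp only [mem_sigma, mem_filter, mem_Icc, mem_oddTriples, Nat.even_iff, Nat.odd_iff,
      Sigma.forall, Prod.forall, Sigma.mk.injEq, Prod.mk.injEq, heq_eq_eq]
    lia

lemma two_mul_sum_even_harmonicMod_mul_inv (hp : 3 < p) :
    2 * ∑ k ∈ Icc 1 (p - 1) with Even k, harmonicMod p k * (k : ZMod p)⁻¹ =
      fermatQuotient p 2 ^ 2 := by
  have h2 := two_ne_zero_of_ne_two (p := p) (by lia)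
  have hsplit : ∀ k, harmonicMod p k = ∑ i ∈ Icc 1 k with Even i, (i : ZMod p)⁻¹ +
      ∑ i ∈ Icc 1 k with Odd i, (i : ZMod p)⁻¹ := fun k ↦
    (sum_filter_even_add_sum_filter_odd _ _).symm
  have heven : 2 ^ 2 * ∑ k ∈ Icc 1 (p - 1) with Even k,
      (∑ i ∈ Icc 1 k with Even i, (i : ZMod p)⁻¹) * (k : ZMod p)⁻¹ =
        2 * fermatQuotient p 2 ^ 2 := by
    rw [← sum_half_harmonicMod_mul_inv hp, sum_Icc_filter_even, mul_sum]
    refine sum_congr rfl fun k _ ↦ ?_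
    have hinner := two_mul_sum_even_inv (p := p) (by lia) (2 * k)
    rw [Nat.mul_div_cancel_left k two_pos] at hinner
    rw [← hinner, Nat.cast_mul, Nat.cast_two, mul_inv]
    field_simp
  simp only [hsplit, add_mul, sum_add_distrib]
  rw [sum_even_sum_odd_inv_mul_inv hp]
  refine mul_left_cancel₀ h2 ?_
  linear_combination heven

end HarmonicSums

section EulerNumbers

variable {p : ℕ} [Fact p.Prime]

lemma eulerNumber_eq_neg_sum {n : ℕ} (hn : n ≠ 0) :
    eulerNumber n = -∑ j ∈ range n with Even (n - j), n.choose j * eulerNumber j := by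
  obtain ⟨m, rfl⟩ := Nat.exists_eq_succ_of_ne_zero hn
  rw [eulerNumber, sum_attach (range (m + 1)) fun j ↦
    if Even (m + 1 - j) then ((m + 1).choose (m + 1 - j) : ℚ) * eulerNumber j else 0,
    ← sum_filter]
  refine congrArg _ (sum_congr rfl fun j hj ↦ ?_)
  rw [Nat.choose_symm (mem_range.mp (mem_filter.mp hj).1).le]

lemma two_mul_sum_even_choose {R : Type*} [CommRing R] (n : ℕ) (x : R) :
    2 * ∑ j ∈ range (n + 1) with Even (n - j), n.choose j * x ^ j = (x + 1) ^ n + (x - 1) ^ n := by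
  rw [sub_eq_add_neg, add_pow, add_pow, ← sum_add_distrib, sum_filter, mul_sum]
  refine sum_congr rfl fun j _ ↦ ?_
  split_ifs with heven
  · rw [heven.neg_one_pow, one_pow]
    ring
  · rw [(Nat.not_even_iff_odd.mp heven).neg_one_pow, one_pow]
    ring

lemma sum_range_neg_one_pow_mul_add {R : Type*} [Ring R] (n : ℕ) (f : ℕ → R) :
    ∑ k ∈ range n, (-1) ^ k * (f (k + 1) + f k) = f 0 - (-1) ^ n * f n := by
  have h := sum_range_sub' (fun k ↦ (-1) ^ k * f k) n
  rw [pow_zero, one_mul] at h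
  rw [← h]
  refine sum_congr rfl fun k _ ↦ ?_
  rw [pow_succ]
  noncomm_ring

lemma sum_even_choose_mul_sum_odd_pow (hp : p ≠ 2) {n : ℕ} (hn : n ≠ 0) :
    ∑ j ∈ range (n + 1) with Even (n - j),
      (n.choose j : ZMod p) * ∑ k ∈ range p, (-1) ^ k * (2 * k + 1 : ZMod p) ^ j = 0 := by
  refine (mul_eq_zero.mp ?_).resolve_left (two_ne_zero_of_ne_two hp)
  calc 2 * ∑ j ∈ range (n + 1) with Even (n - j),
        (n.choose j : ZMod p) * ∑ k ∈ range p, (-1) ^ k * (2 * k + 1 : ZMod p) ^ j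
    _ = ∑ k ∈ range p, (-1) ^ k *
          (2 * ∑ j ∈ range (n + 1) with Even (n - j), n.choose j * (2 * k + 1 : ZMod p) ^ j) := by
      simp only [mul_sum]
      rw [sum_comm]
      refine sum_congr rfl fun k _ ↦ sum_congr rfl fun j _ ↦ by ring
    _ = ∑ k ∈ range p, (-1) ^ k * ((2 * (k + 1 : ℕ)) ^ n + (2 * k : ZMod p) ^ n) := by
      refine sum_congr rfl fun k _ ↦ ?_
      rw [two_mul_sum_even_choose]
      push_cast
      ring
    _ = 0 := by
      rw [sum_range_neg_one_pow_mul_add p fun k ↦ (2 * k : ZMod p) ^ n]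
      simp [hn]

lemma reducesTo_eulerNumber (hp : p ≠ 2) (n : ℕ) :
    ReducesTo p (eulerNumber n) (∑ k ∈ range p, (-1) ^ k * (2 * k + 1 : ZMod p) ^ n) := by
  induction n using Nat.strong_induction_on with
  | _ n ih =>
    rcases eq_or_ne n 0 with rfl | hn
    · have hone : ∑ k ∈ range p, (-1 : ZMod p) ^ k = 1 := by
        rw [neg_one_geom_sum, if_neg (Nat.not_even_iff_odd.mpr (odd_of_ne_two hp))]
      simpa [eulerNumber, hone] using ReducesTo.intCast p 1
    · have hrec := sum_even_choose_mul_sum_odd_pow hp hn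
      rw [range_add_one, filter_insert, Nat.sub_self, if_pos Even.zero, sum_insert (by simp),
        Nat.choose_self, Nat.cast_one, one_mul] at hrec
      rw [eulerNumber_eq_neg_sum hn, eq_neg_of_add_eq_zero_left hrec]
      exact (ReducesTo.sum fun j hj ↦ (ReducesTo.natCast p _).mul
        (ih j (mem_range.mp (mem_filter.mp hj).1))).neg

lemma pow_sub_three_eq_inv_sq (hp : 3 < p) (x : ZMod p) : x ^ (p - 3) = x⁻¹ ^ 2 := by
  rcases eq_or_ne x 0 with rfl | hx
  · rw [inv_zero, zero_pow (by lia), zero_pow two_ne_zero]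
  · rw [inv_pow]
    refine eq_inv_of_mul_eq_one_left ?_
    rw [← pow_add, show p - 3 + 2 = p - 1 by lia, ZMod.pow_card_sub_one_eq_one hx]

lemma sum_neg_one_pow_mul_even_function {R : Type*} [CommRing R] {n : ℕ}
    (hn : (2 * n + 1 : R) = 0) (g : R → R) (hg : ∀ x, g (-x) = g x) :
    ∑ k ∈ range (2 * n + 1), (-1) ^ k * g (2 * k + 1) =
      (-1) ^ n * (g 0 + 2 * ∑ i ∈ Icc 1 n, (-1) ^ i * g (2 * i)) := by
  rw [sum_range_two_mul_add_one, hn, mul_add, mul_sum, mul_sum]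
  refine congrArg _ (sum_congr rfl fun i hi ↦ ?_)
  have hin := (mem_Icc.mp hi).2
  have hadd : (2 * (n + i : ℕ) + 1 : R) = 2 * i := by
    push_cast
    linear_combination hn
  have hsub : (2 * (n - i : ℕ) + 1 : R) = -(2 * i) := by
    rw [Nat.cast_sub hin]
    linear_combination hn
  have hsign : (-1 : R) ^ (n - i) = (-1) ^ (n + i) := neg_one_pow_congr (by grind)
  rw [hadd, hsub, hg, hsign, pow_add]
  ring

lemma two_mul_sum_range_neg_one_pow_mul_pow_sub_three (hp : 3 < p) :
    2 * ∑ k ∈ range p, (-1) ^ k * (2 * k + 1 : ZMod p) ^ (p - 3) =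
      (-1) ^ ((p - 1) / 2) * ∑ i ∈ Icc 1 ((p - 1) / 2), (-1) ^ i * (i : ZMod p)⁻¹ ^ 2 := by
  have hp2 : p ≠ 2 := by lia
  have hodd := Nat.odd_iff.mp (odd_of_ne_two hp2)
  set n := (p - 1) / 2
  have hn : 2 * n + 1 = p := by lia
  have hzero : (2 * n + 1 : ZMod p) = 0 :=
    mod_cast (ZMod.natCast_eq_zero_iff (2 * n + 1) p).mpr hn.symm.dvd
  have hcentred := sum_neg_one_pow_mul_even_function hzero (fun x ↦ x⁻¹ ^ 2) fun x ↦ by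
    rw [inv_neg, neg_sq]
  have hscale : 2 ^ 2 * ∑ i ∈ Icc 1 n, (-1) ^ i * (2 * i : ZMod p)⁻¹ ^ 2 =
      ∑ i ∈ Icc 1 n, (-1) ^ i * (i : ZMod p)⁻¹ ^ 2 := by
    rw [mul_sum]
    refine sum_congr rfl fun i _ ↦ ?_
    rw [mul_inv, mul_left_comm, ← mul_pow, mul_inv_cancel_left₀ (two_ne_zero_of_ne_two hp2)]
  simp only [pow_sub_three_eq_inv_sq hp]
  rw [hn, inv_zero] at hcentred
  rw [hcentred, ← hscale]
  ring

lemma reducesTo_eulerNumber_sub_three (hp : 3 < p) :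
    ReducesTo p ((-1) ^ ((p - 1) / 2) * eulerNumber (p - 3))
      (-∑ k ∈ Icc 1 ((p - 1) / 2) with Odd k, (k : ZMod p)⁻¹ ^ 2) := by
  have hp2 : p ≠ 2 := by lia
  have hE : ∑ k ∈ range p, (-1) ^ k * (2 * k + 1 : ZMod p) ^ (p - 3) =
      (-1) ^ ((p - 1) / 2) * -∑ k ∈ Icc 1 ((p - 1) / 2) with Odd k, (k : ZMod p)⁻¹ ^ 2 := by
    have hzero := sum_half_inv_sq hp
    rw [← sum_filter_even_add_sum_filter_odd] at hzero
    have hdouble := two_mul_sum_range_neg_one_pow_mul_pow_sub_three hp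
    rw [sum_neg_one_pow_mul (Icc 1 ((p - 1) / 2)), eq_neg_of_add_eq_zero_left hzero] at hdouble
    refine mul_left_cancel₀ (two_ne_zero_of_ne_two hp2) ?_
    linear_combination hdouble
  have h := (ReducesTo.intCast p ((-1) ^ ((p - 1) / 2))).mul (reducesTo_eulerNumber hp2 (p - 3))
  rw [hE] at h
  push_cast at h
  rwa [← mul_assoc, ← mul_pow, neg_one_mul, neg_neg, one_pow, one_mul] at h

end EulerNumbers

section OddHarmonicSum

variable {p : ℕ} [Fact p.Prime]

lemma four_mul_sum_odd_harmonicMod_mul_inv (hp : 3 < p) :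
    4 * ∑ k ∈ Icc 1 ((p - 1) / 2) with Odd k, harmonicMod p k * (k : ZMod p)⁻¹ =
      3 * fermatQuotient p 2 ^ 2 +
        2 * ∑ k ∈ Icc 1 ((p - 1) / 2) with Odd k, (k : ZMod p)⁻¹ ^ 2 := by
  have hp2 : p ≠ 2 := by lia
  have hreflect : ∑ k ∈ Icc 1 ((p - 1) / 2) with Odd k,
      harmonicMod p (p - k) * ((p - k : ℕ) : ZMod p)⁻¹ =
        ∑ k ∈ Icc 1 ((p - 1) / 2) with Odd k, (k : ZMod p)⁻¹ ^ 2 -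
          ∑ k ∈ Icc 1 ((p - 1) / 2) with Odd k, harmonicMod p k * (k : ZMod p)⁻¹ := by
    rw [← sum_sub_distrib]
    refine sum_congr rfl fun k hk ↦ ?_
    rw [mem_filter, mem_Icc] at hk
    rw [harmonicMod_self_sub hp2 hk.1.1 (by lia), natCast_self_sub (by lia), inv_neg]
    ring
  have heven := two_mul_sum_even_harmonicMod_mul_inv hp
  rw [sum_Icc_filter_even_of_odd (odd_of_ne_two hp2), hreflect] at heven
  have hfull := sum_half_harmonicMod_mul_inv hp
  rw [← sum_filter_even_add_sum_filter_odd] at hfull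
  linear_combination 2 * hfull - heven

lemma reducesTo_sum_odd_H_div :
    ReducesTo p (∑ k ∈ Icc 1 ((p - 1) / 2) with Odd k, H k / k)
      (∑ k ∈ Icc 1 ((p - 1) / 2) with Odd k, harmonicMod p k * (k : ZMod p)⁻¹) := by
  simp only [← div_eq_mul_inv]
  refine ReducesTo.sum fun k hk ↦ ?_
  rw [mem_filter, mem_Icc] at hk
  exact (reducesTo_H (by lia)).div_natCast (natCast_ne_zero_of_lt hk.1.1 (by lia))

end OddHarmonicSum

theorem stmt14 (p : ℕ) (hp : p.Prime) (hp3 : 3 < p) :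
    ratModEq p
      (∑ k ∈ (Finset.Icc 1 ((p - 1) / 2)).filter (fun k => Odd k), H k / k)
      (3 / 4 * (((2 : ℚ) ^ (p - 1) - 1) / p) ^ 2
        - (-1) ^ ((p - 1) / 2) * eulerNumber (p - 3) / 2) := by
  have : Fact p.Prime := ⟨hp⟩
  have hp2 : p ≠ 2 := by lia
  have h4 : ((2 ^ 2 : ℕ) : ZMod p) ≠ 0 := mod_cast pow_ne_zero 2 (two_ne_zero_of_ne_two hp2)
  have hsum : ∑ k ∈ Icc 1 ((p - 1) / 2) with Odd k, harmonicMod p k * (k : ZMod p)⁻¹ =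
      (3 * fermatQuotient p 2 ^ 2 -
        2 * -∑ k ∈ Icc 1 ((p - 1) / 2) with Odd k, (k : ZMod p)⁻¹ ^ 2) / (2 ^ 2 : ℕ) := by
    refine eq_div_of_mul_eq h4 ?_
    push_cast
    linear_combination four_mul_sum_odd_harmonicMod_mul_inv hp3
  have hrhs := ((ReducesTo.intCast p (3 * fermatQuotient p 2 ^ 2)).sub
    ((ReducesTo.natCast p 2).mul (reducesTo_eulerNumber_sub_three hp3))).div_natCast h4
  refine reducesTo_sum_odd_H_div.ratModEq ?_
  rw [hsum, ← cast_fermatQuotient_two hp2]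
  push_cast at hrhs ⊢
  convert hrhs using 1
  ring
end
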